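/- arXiv:0802.2824 — 3 statements merged into one kernel-verified Lean document; each statement's English description precedes it below -/
import Mathlib

section
/- Let d = 2e be even and let v = (σ,z) ∈ G(r,d) with σ a d-cycle (its support is all of {1,…,d}). Then w := v·v̄ satisfies: |w| = σ² is a product of two disjoint cycles of length e whose supports partition {1,…,d}, and the sum of the colors of w over these two cycles is 0, i.e. ∑_{i=1}^{d} z_w(i) = 0 in ℤ/rℤ. Moreover, for every w ∈ G(r,d) such that |w| is a product of two disjoint e-cycles covering {1,…,d} and ∑_i z_w(i) = 0, the number of elements v ∈ G(r,d) with |v| a d-cycle and v·v̄ = w equals r·d/2. -/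
/-!
Write `v = (σ, z)`. The equation `v * bar v = w` says that `σ` is a square root of `|w|` and that
`z (σ i) - z i = z_w i` for all `i`, so it separates into a count of permutations and a count of
colorings.

A full cycle `σ` with `σ ^ 2 = τ` exchanges the two cycles `s`, `sᶜ` of `τ`, and is determined by
the image of one point `a ∈ s`, which may be any of the `e` points of `sᶜ`. Given `σ`, the equation
for `z` prescribes the increments of `z` along a cycle: it is solvable exactly because the
increments sum to `0`, and a solution is determined by the value `z a`, which leaves `r` choices.
-/

open Finset CategoryTheory

/-- The wreath product `ℤ_r ≀ S_n`: elements are pairs `(σ, z)` with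
`σ` a permutation of `{1,…,n}` and `z ∈ (ℤ/rℤ)^n`.  The multiplication is
`(σ,c)·(τ,d) = (στ, (c_{τ⁻¹(i)} + d_i)_i)`, where in the paper's convention
permutations compose left-to-right; translated to Lean's convention
(`(σ * τ) x = σ (τ x)`) this reads `(σ,c)·(τ,d) = (σ * τ, fun i => c (τ i) + d i)`,
i.e. the semidirect product of `Fin n → ZMod r` by `Equiv.Perm (Fin n)`
acting by permuting coordinates. -/
def Wreath (r n : ℕ) : Type := Equiv.Perm (Fin n) × (Fin n → ZMod r)

namespace Wreath

variable {r n : ℕ}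

instance : Group (Wreath r n) where
  mul v w := ⟨v.1 * w.1, fun i => v.2 (w.1 i) + w.2 i⟩
  one := ⟨1, 0⟩
  inv v := ⟨v.1⁻¹, fun i => -v.2 (v.1⁻¹ i)⟩
  mul_assoc a b c := Prod.ext (mul_assoc _ _ _) (funext fun i => add_assoc _ _ _)
  one_mul a := by
    refine Prod.ext (one_mul _) (funext fun i => ?_)
    show (0 : Fin n → ZMod r) (a.1 i) + a.2 i = a.2 i
    simp
  mul_one a := by
    refine Prod.ext (mul_one _) (funext fun i => ?_)
    show a.2 ((1 : Equiv.Perm (Fin n)) i) + (0 : Fin n → ZMod r) i = a.2 i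
    simp
  inv_mul_cancel a := by
    refine Prod.ext (inv_mul_cancel _) (funext fun i => ?_)
    show -a.2 (a.1⁻¹ (a.1 i)) + a.2 i = (0 : Fin n → ZMod r) i
    simp

instance [NeZero r] : Fintype (Wreath r n) :=
  inferInstanceAs (Fintype (Equiv.Perm (Fin n) × (Fin n → ZMod r)))

instance : DecidableEq (Wreath r n) :=
  inferInstanceAs (DecidableEq (Equiv.Perm (Fin n) × (Fin n → ZMod r)))

theorem mul_def (v w : Wreath r n) :
    v * w = ⟨v.1 * w.1, fun i => v.2 (w.1 i) + w.2 i⟩ := rfl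

theorem one_def : (1 : Wreath r n) = ⟨1, 0⟩ := rfl

theorem inv_def (v : Wreath r n) : v⁻¹ = ⟨v.1⁻¹, fun i => -v.2 (v.1⁻¹ i)⟩ := rfl

/-- The bar operation `(σ, z) ↦ (σ, −z)`. -/
def bar (v : Wreath r n) : Wreath r n := ⟨v.1, -v.2⟩

theorem bar_mul (v w : Wreath r n) : bar (v * w) = bar v * bar w := by
  refine Prod.ext rfl (funext fun i => ?_)
  show -(v.2 (w.1 i) + w.2 i) = -v.2 (w.1 i) + -w.2 i
  ring

theorem bar_bar (v : Wreath r n) : bar (bar v) = v := by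
  refine Prod.ext rfl ?_
  show - - v.2 = v.2
  simp

/-- `bar` as a group automorphism. -/
def barAut : Wreath r n ≃* Wreath r n where
  toFun := bar
  invFun := bar
  left_inv := bar_bar
  right_inv := bar_bar
  map_mul' := bar_mul

theorem bar_inv (v : Wreath r n) : bar v⁻¹ = (bar v)⁻¹ :=
  map_inv (barAut : Wreath r n ≃* Wreath r n) v

/-- `vᵗ := (v̄)⁻¹`. -/
def tr (v : Wreath r n) : Wreath r n := (bar v)⁻¹

/-- Conjugation `w ↦ π w πᵗ` maps absolute involutions to absolute involutions. -/
theorem conj_absInv {w : Wreath r n} (hw : w * bar w = 1) (π : Wreath r n) :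
    (π * w * tr π) * bar (π * w * tr π) = 1 := by
  have h1 : bar (π * w * tr π) = bar π * bar w * π⁻¹ := by
    rw [bar_mul, bar_mul, tr, bar_inv, bar_bar]
  calc (π * w * tr π) * bar (π * w * tr π)
      = π * (w * bar w) * π⁻¹ := by rw [h1, tr]; group
    _ = 1 := by rw [hw]; group

end Wreath

/-- The set of inversions of `σ`, encoded as ordered pairs `(i,j)` with `i < j`
and `σ j < σ i` (one representative for each unordered pair `{i,j}` with
`(j−i)(σ(j)−σ(i)) < 0`). -/
def invPairs {n : ℕ} (σ : Equiv.Perm (Fin n)) : Finset (Fin n × Fin n) :=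
  Finset.univ.filter fun p => p.1 < p.2 ∧ σ p.2 < σ p.1

/-- The 2-cycles of an involution `u`, encoded as ordered pairs `(i,j)` with `i < j`,
`u i = j` and `u j = i` (one representative for each unordered pair `{i,j}`). -/
def pairSet {n : ℕ} (u : Equiv.Perm (Fin n)) : Finset (Fin n × Fin n) :=
  Finset.univ.filter fun p => p.1 < p.2 ∧ u p.1 = p.2 ∧ u p.2 = p.1

/-- `sign_o(π,w) := (−1)^{#(Inv(|π|) ∩ Pair(|w|))}`. -/
def signO {r n : ℕ} (π w : Wreath r n) : ℤ :=
  (-1) ^ ((invPairs π.1 ∩ pairSet w.1).card)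

/-- A family of finite-dimensional complex representations forming a complete set of
pairwise non-isomorphic irreducible representations of `G`. -/
def IsCompleteIrrFamily {G : Type} [Monoid G] {ι : Type} (V : ι → FDRep ℂ G) : Prop :=
  (∀ i, Simple (V i)) ∧ (∀ i j, Nonempty (V i ≅ V j) → i = j) ∧
    ∀ W : FDRep ℂ G, Simple W → ∃ i, Nonempty (V i ≅ W)

/-- `σ` is a single `d`-cycle on all of `Fin d`: every point can be moved to every
other point by a power of `σ`. -/
def IsFullCycle {d : ℕ} (σ : Equiv.Perm (Fin d)) : Prop :=
  ∀ x y : Fin d, ∃ k : ℕ, (σ ^ k) x = y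

/-- `s` is (the support of) a single cycle of `σ`, i.e. an orbit of `σ`. -/
def IsOrbitSet {n : ℕ} (σ : Equiv.Perm (Fin n)) (s : Finset (Fin n)) : Prop :=
  s.Nonempty ∧ (∀ x ∈ s, σ x ∈ s) ∧ ∀ x ∈ s, ∀ y ∈ s, ∃ k : ℕ, (σ ^ k) x = y

/-- `σ` is a product of two disjoint `e`-cycles whose supports partition the
underlying set. -/
def IsTwoCycles {d : ℕ} (σ : Equiv.Perm (Fin d)) (e : ℕ) : Prop :=
  ∃ s t : Finset (Fin d), Disjoint s t ∧ s ∪ t = Finset.univ ∧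
    s.card = e ∧ t.card = e ∧ IsOrbitSet σ s ∧ IsOrbitSet σ t

section Cycles

open Equiv

variable {α β M : Type*} [AddCommMonoid M] {σ τ : Perm α} {s : Finset α} {a b : α}

theorem isCycleOn_induction {p : α → Prop} (hσ : σ.IsCycleOn s) (ha : a ∈ s) (base : p a)
    (step : ∀ x ∈ s, p x → p (σ x)) : ∀ x ∈ s, p x := by
  intro x hx
  obtain ⟨n, -, rfl⟩ := hσ.exists_pow_eq ha hx
  clear hx
  induction n with
  | zero => exact base
  | succ n ih =>
    rw [pow_succ', Perm.mul_apply]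
    exact step _ (hσ.1.mapsTo.perm_pow n ha) ih

theorem exists_apply_pow_eq_of_periodic (hσ : σ.IsCycleOn s) (ha : a ∈ s) {y : ℕ → β}
    (hy : Function.Periodic y #s) : ∃ f : α → β, ∀ n, f ((σ ^ n) a) = y n := by
  have y_factors : y.FactorsThrough fun n => (σ ^ n) a := fun m n hmn => by
    have hmod : m % #s = n % #s := (hσ.pow_apply_eq_pow_apply ha).1 hmn
    rw [← hy.map_mod_nat m, hmod, hy.map_mod_nat]
  exact ⟨Function.extend (fun n => (σ ^ n) a) y fun _ => y 0, y_factors.extend_apply _⟩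

theorem pow_add_card_apply (hσ : σ.IsCycleOn s) (ha : a ∈ s) (n : ℕ) :
    (σ ^ (n + #s)) a = (σ ^ n) a := by
  rw [pow_add, Perm.mul_apply, hσ.pow_card_apply ha]

theorem sum_range_card_pow_apply (hσ : σ.IsCycleOn s) (ha : a ∈ s) (u : α → M) :
    ∑ k ∈ range #s, u ((σ ^ k) a) = ∑ x ∈ s, u x := by
  refine sum_bij (fun k _ => (σ ^ k) a) (fun k _ => hσ.1.mapsTo.perm_pow k ha) ?_ ?_
    fun _ _ => rfl
  · intro k hk l hl hkl
    exact ((hσ.pow_apply_eq_pow_apply ha).1 hkl).eq_of_lt_of_lt (mem_range.1 hk) (mem_range.1 hl)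
  · intro x hx
    obtain ⟨k, hk, rfl⟩ := hσ.exists_pow_eq ha hx
    exact ⟨k, mem_range.2 hk, rfl⟩

theorem exists_apply_eq_add_of_sum_eq_zero (hσ : σ.IsCycleOn s) (ha : a ∈ s) {u : α → M}
    (hu : ∑ x ∈ s, u x = 0) (c : M) :
    ∃ z : α → M, z a = c ∧ ∀ x ∈ s, z (σ x) = z x + u x := by
  have periodic_partialSum :
      Function.Periodic (fun n => c + ∑ k ∈ range n, u ((σ ^ k) a)) #s := fun n => by
    have hshift (k : ℕ) : (σ ^ (#s + k)) a = (σ ^ k) a := by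
      rw [add_comm, pow_add_card_apply hσ ha]
    simp only [add_comm n, sum_range_add, sum_range_card_pow_apply hσ ha, hu, zero_add, hshift]
  obtain ⟨z, hz⟩ := exists_apply_pow_eq_of_periodic hσ ha periodic_partialSum
  refine ⟨z, by simpa using hz 0, fun x hx => ?_⟩
  obtain ⟨n, -, rfl⟩ := hσ.exists_pow_eq ha hx
  rw [← Perm.mul_apply, ← pow_succ', hz, hz, sum_range_succ, add_assoc]

theorem isCycleOn_pow_fiber {k : ℕ} (hσ : σ.IsCycleOn Set.univ) {p : α → ZMod k}
    (hp : ∀ x, p (σ x) = p x + 1) (c : ZMod k) : (σ ^ k).IsCycleOn {x | p x = c} := by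
  have p_zpow (n : ℤ) (x : α) : p ((σ ^ n) x) = p x + n := by
    induction n with
    | zero => simp
    | succ n ih =>
      rw [add_comm (n : ℤ), zpow_one_add, Perm.mul_apply, hp, ih]
      push_cast
      ring
    | pred n ih =>
      have hstep := hp ((σ ^ (-(n : ℤ) - 1)) x)
      rw [← Perm.mul_apply, ← zpow_one_add, add_sub_cancel, ih] at hstep
      rw [eq_sub_of_add_eq hstep.symm]
      push_cast
      ring
  have p_pow (x : α) : p ((σ ^ k) x) = p x := by simpa using p_zpow k x
  refine ⟨(σ ^ k).bijOn fun x => ?_, fun x hx y hy => ?_⟩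
  · rw [Set.mem_ofPred_eq, Set.mem_ofPred_eq, p_pow]
  · obtain ⟨n, rfl⟩ := hσ.2 (Set.mem_univ x) (Set.mem_univ y)
    obtain ⟨m, rfl⟩ : (k : ℤ) ∣ n := by
      rw [← ZMod.intCast_zmod_eq_zero_iff_dvd]
      rwa [Set.mem_ofPred_eq, p_zpow, hx, add_eq_left] at hy
    exact ⟨m, by rw [zpow_mul, zpow_natCast]⟩

theorem sameCycle_iff_exists_nat_pow_eq [Finite α] :
    σ.SameCycle a b ↔ ∃ k : ℕ, (σ ^ k) a = b :=
  ⟨Perm.SameCycle.exists_nat_pow_eq, fun ⟨k, hk⟩ => ⟨k, by rwa [zpow_natCast]⟩⟩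

theorem eq_of_sq_eq_sq_of_apply_eq [Finite α] (hσ : σ.IsCycleOn Set.univ) (hsq : σ ^ 2 = τ ^ 2)
    (ha : σ a = τ a) : σ = τ := by
  cases nonempty_fintype α
  rw [← coe_univ] at hσ
  have sq_apply (x : α) : σ (σ x) = τ (τ x) := by
    simpa only [pow_two, Perm.mul_apply] using congrArg (· x) hsq
  have agree : ∀ x ∈ univ, σ x = τ x :=
    isCycleOn_induction hσ (mem_univ a) ha fun x _ hx => by rw [sq_apply, hx]
  exact Equiv.ext fun x => agree x (mem_univ x)

variable [Fintype α]

theorem card_apply_eq_add (hσ : σ.IsCycleOn Set.univ) [Nonempty α] {u : α → M}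
    (hu : ∑ x, u x = 0) : Nat.card {z : α → M // ∀ x, z (σ x) = z x + u x} = Nat.card M := by
  rw [← coe_univ] at hσ
  obtain ⟨a⟩ := ‹Nonempty α›
  refine Nat.card_eq_of_bijective (fun z => z.1 a) ⟨?_, fun c => ?_⟩
  · rintro ⟨z, hz⟩ ⟨z', hz'⟩ (haz : z a = z' a)
    have agree : ∀ x ∈ univ, z x = z' x :=
      isCycleOn_induction hσ (mem_univ a) haz fun x _ hx => by rw [hz, hz', hx]
    exact Subtype.ext (funext fun x => agree x (mem_univ x))
  · obtain ⟨z, hza, hz⟩ := exists_apply_eq_add_of_sum_eq_zero hσ (mem_univ a) hu c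
    exact ⟨⟨z, fun x => hz x (mem_univ x)⟩, hza⟩

variable [DecidableEq α]

theorem two_mul_card_of_card_eq_card_compl (hcard : #s = #sᶜ) : 2 * #s = Fintype.card α := by
  rw [← card_add_card_compl s, ← hcard, two_mul]

theorem exists_isCycleOn_sq_compl [Nonempty α] (hσ : σ.IsCycleOn Set.univ)
    (hα : Even (Fintype.card α)) :
    ∃ s : Finset α, s.Nonempty ∧ #s = #sᶜ ∧
      (σ ^ 2).IsCycleOn s ∧ (σ ^ 2).IsCycleOn (sᶜ : Finset α) := by
  obtain ⟨a⟩ := ‹Nonempty α›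
  obtain ⟨p, hpa, hp⟩ : ∃ p : α → ZMod 2, p a = 0 ∧ ∀ x, p (σ x) = p x + 1 := by
    have sum_one : ∑ _x : α, (1 : ZMod 2) = 0 := by
      simpa [ZMod.natCast_eq_zero_iff_even] using hα
    rw [← coe_univ] at hσ
    simpa using exists_apply_eq_add_of_sum_eq_zero hσ (mem_univ a) sum_one 0
  have ne_zero_iff : ∀ q : ZMod 2, q ≠ 0 ↔ q = 1 := by decide
  have compl_fiber : ({x | p x = 0} : Finset α)ᶜ = ({x | p x = 1} : Finset α) := by
    rw [compl_filter]
    exact filter_congr fun x _ => ne_zero_iff (p x)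
  refine ⟨({x | p x = 0} : Finset α), ⟨a, by simpa using hpa⟩, ?_, ?_, ?_⟩
  · rw [compl_fiber]
    exact card_equiv σ fun x => by simp [hp]
  · simpa using isCycleOn_pow_fiber hσ hp 0
  · simpa [compl_fiber] using isCycleOn_pow_fiber hσ hp 1

theorem isCycleOn_univ_iff_apply_notMem_of_sq (hs : (σ ^ 2).IsCycleOn s)
    (hsc : (σ ^ 2).IsCycleOn (sᶜ : Finset α)) (hne : sᶜ.Nonempty) (ha : a ∈ s) :
    σ.IsCycleOn Set.univ ↔ σ a ∉ s := by
  constructor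
  · intro hσ hσa
    have mapsTo_s : ∀ x ∈ s, σ x ∈ s := isCycleOn_induction hs ha hσa fun x _ hx =>
      hs.1.mapsTo hx
    rw [← coe_univ] at hσ
    obtain ⟨b, hb⟩ := hne
    exact mem_compl.1 hb (isCycleOn_induction hσ (mem_univ a) ha (fun x _ => mapsTo_s x) b
      (mem_univ b))
  · intro hσa
    have sameCycle_a (x : α) : σ.SameCycle a x := by
      by_cases hx : x ∈ s
      · exact (hs.2 ha hx).of_pow
      · exact (hsc.2 (mem_compl.2 hσa) (mem_compl.2 hx)).of_pow.of_apply_left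
    exact ⟨σ.bijOn fun _ => Iff.rfl, fun x _ y _ => (sameCycle_a x).symm.trans (sameCycle_a y)⟩

theorem exists_sq_eq_and_apply_eq (hs : τ.IsCycleOn s) (hsc : τ.IsCycleOn (sᶜ : Finset α))
    (hcard : #s = #sᶜ) (ha : a ∈ s) (hb : b ∈ sᶜ) : ∃ σ : Perm α, σ ^ 2 = τ ∧ σ a = b := by
  obtain ⟨f, hf⟩ : ∃ f : α → α, ∀ n, f ((τ ^ n) a) = (τ ^ n) b :=
    exists_apply_pow_eq_of_periodic hs ha fun n => by rw [hcard, pow_add_card_apply hsc hb]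
  obtain ⟨g, hg⟩ : ∃ g : α → α, ∀ n, g ((τ ^ n) b) = (τ ^ (n + 1)) a :=
    exists_apply_pow_eq_of_periodic hsc hb fun n => by
      rw [← hcard, add_right_comm, pow_add_card_apply hs ha]
  have pow_a_mem (n : ℕ) : (τ ^ n) a ∈ s := hs.1.mapsTo.perm_pow n ha
  have pow_b_notMem (n : ℕ) : (τ ^ n) b ∉ s := mem_compl.1 (hsc.1.mapsTo.perm_pow n hb)
  let h : α → α := s.piecewise f g
  have h_pow_a (n : ℕ) : h ((τ ^ n) a) = (τ ^ n) b :=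
    (piecewise_eq_of_mem s f g (pow_a_mem n)).trans (hf n)
  have h_pow_b (n : ℕ) : h ((τ ^ n) b) = (τ ^ (n + 1)) a :=
    (piecewise_eq_of_notMem s f g (pow_b_notMem n)).trans (hg n)
  have h_comp_h : h ∘ h = τ := by
    funext x
    by_cases hx : x ∈ s
    · obtain ⟨n, -, rfl⟩ := hs.exists_pow_eq ha hx
      rw [Function.comp_apply, h_pow_a, h_pow_b, pow_succ', Perm.mul_apply]
    · obtain ⟨n, -, rfl⟩ := hsc.exists_pow_eq hb (mem_compl.2 hx)
      rw [Function.comp_apply, h_pow_b, h_pow_a, pow_succ', Perm.mul_apply]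
  have h_bijective : h.Bijective :=
    ⟨.of_comp (h_comp_h ▸ τ.injective), .of_comp (h_comp_h ▸ τ.surjective)⟩
  exact ⟨.ofBijective h h_bijective, Equiv.ext fun x => congrFun h_comp_h x, h_pow_a 0⟩

theorem card_isCycleOn_univ_and_sq_eq (hs : τ.IsCycleOn s) (hsc : τ.IsCycleOn (sᶜ : Finset α))
    (hcard : #s = #sᶜ) (hne : s.Nonempty) :
    Nat.card {σ : Perm α // σ.IsCycleOn Set.univ ∧ σ ^ 2 = τ} = #s := by
  obtain ⟨a, ha⟩ := hne
  have compl_nonempty : sᶜ.Nonempty := card_pos.1 (hcard ▸ card_pos.2 ⟨a, ha⟩)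
  have isCycleOn_iff {σ : Perm α} (hσ : σ ^ 2 = τ) : σ.IsCycleOn Set.univ ↔ σ a ∈ sᶜ := by
    subst hσ
    rw [isCycleOn_univ_iff_apply_notMem_of_sq hs hsc compl_nonempty ha, mem_compl]
  rw [hcard, ← Nat.card_eq_finsetCard]
  refine Nat.card_eq_of_bijective
    (fun σ => ⟨σ.1 a, (isCycleOn_iff σ.2.2).1 σ.2.1⟩) ⟨?_, ?_⟩
  · rintro ⟨σ, hσ, hsq⟩ ⟨σ', _, hsq'⟩ h
    exact Subtype.ext (eq_of_sq_eq_sq_of_apply_eq hσ (hsq.trans hsq'.symm)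
      (congrArg Subtype.val h))
  · rintro ⟨b, hb⟩
    obtain ⟨σ, hsq, rfl⟩ := exists_sq_eq_and_apply_eq hs hsc hcard ha hb
    exact ⟨⟨σ, (isCycleOn_iff hsq).2 hb, hsq⟩, rfl⟩

end Cycles

theorem isFullCycle_iff_isCycleOn_univ {d : ℕ} {σ : Equiv.Perm (Fin d)} :
    IsFullCycle σ ↔ σ.IsCycleOn Set.univ := by
  simp only [IsFullCycle, ← sameCycle_iff_exists_nat_pow_eq]
  exact ⟨fun h => ⟨σ.bijOn fun _ => Iff.rfl, fun x _ y _ => h x y⟩,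
    fun h x y => h.2 (Set.mem_univ x) (Set.mem_univ y)⟩

theorem isOrbitSet_iff_isCycleOn {n : ℕ} {σ : Equiv.Perm (Fin n)} {s : Finset (Fin n)} :
    IsOrbitSet σ s ↔ s.Nonempty ∧ σ.IsCycleOn s := by
  simp only [IsOrbitSet, ← sameCycle_iff_exists_nat_pow_eq]
  refine and_congr_right fun _ => and_congr_left fun _ => ⟨fun h => ?_, fun h _ hx => h.mapsTo hx⟩
  exact ⟨h, σ.injective.injOn, surjOn_of_injOn_of_card_le σ h σ.injective.injOn le_rfl⟩

theorem isTwoCycles_iff_exists_isCycleOn_compl {e : ℕ} {σ : Equiv.Perm (Fin (2 * e))} :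
    IsTwoCycles σ e ↔
      ∃ s : Finset (Fin (2 * e)), s.Nonempty ∧ #s = #sᶜ ∧ σ.IsCycleOn s ∧
        σ.IsCycleOn (sᶜ : Finset (Fin (2 * e))) := by
  simp only [IsTwoCycles, isOrbitSet_iff_isCycleOn]
  constructor
  · rintro ⟨s, t, hdisj, hunion, hs_card, ht_card, ⟨hne, hs⟩, -, ht⟩
    obtain rfl : sᶜ = t := IsCompl.compl_eq ⟨hdisj, codisjoint_iff.2 hunion⟩
    exact ⟨s, hne, hs_card.trans ht_card.symm, hs, ht⟩
  · rintro ⟨s, hne, hcard, hs, hsc⟩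
    have card_eq : #s = e := by simpa using two_mul_card_of_card_eq_card_compl hcard
    have compl_nonempty : sᶜ.Nonempty := card_pos.1 (hcard ▸ hne.card_pos)
    exact ⟨s, sᶜ, disjoint_compl_right, union_compl s, card_eq, hcard ▸ card_eq, ⟨hne, hs⟩,
      compl_nonempty, hsc⟩

namespace Wreath

variable {r n : ℕ}

theorem fst_mul_bar (v : Wreath r n) : (v * bar v).1 = v.1 ^ 2 :=
  (pow_two v.1).symm

theorem sum_snd_mul_bar (v : Wreath r n) : ∑ i, (v * bar v).2 i = 0 := by
  calc ∑ i, (v * bar v).2 i = ∑ i, (v.2 (v.1 i) + -v.2 i) := rfl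
    _ = 0 := by rw [sum_add_distrib, Equiv.sum_comp v.1 v.2, sum_neg_distrib, add_neg_cancel]

theorem mul_bar_eq_iff {v w : Wreath r n} :
    v * bar v = w ↔ v.1 ^ 2 = w.1 ∧ ∀ i, v.2 (v.1 i) = v.2 i + w.2 i := by
  rw [← fst_mul_bar]
  refine Prod.ext_iff.trans (and_congr_right fun _ => funext_iff.trans (forall_congr' fun i => ?_))
  change v.2 (v.1 i) + -v.2 i = w.2 i ↔ _
  rw [← sub_eq_add_neg, sub_eq_iff_eq_add']

/-- Splits a solution `v = (σ, z)` of `v * bar v = w`, with `σ` a full cycle, into the square root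
`σ` of the permutation of `w` and the coloring `z`, whose equation depends on `σ`. -/
def absSqrtEquivSigma (w : Wreath r n) :
    {v : Wreath r n // v.1.IsCycleOn Set.univ ∧ v * bar v = w} ≃
      Σ σ : {σ : Equiv.Perm (Fin n) // σ.IsCycleOn Set.univ ∧ σ ^ 2 = w.1},
        {z : Fin n → ZMod r // ∀ i, z (σ.1 i) = z i + w.2 i} where
  toFun v := ⟨⟨v.1.1, v.2.1, (mul_bar_eq_iff.1 v.2.2).1⟩, v.1.2, (mul_bar_eq_iff.1 v.2.2).2⟩
  invFun x := ⟨⟨x.1.1, x.2.1⟩, x.1.2.1, mul_bar_eq_iff.2 ⟨x.1.2.2, x.2.2⟩⟩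

theorem card_isCycleOn_univ_and_mul_bar_eq [NeZero r] {w : Wreath r n} {s : Finset (Fin n)}
    (hs : w.1.IsCycleOn s) (hsc : w.1.IsCycleOn (sᶜ : Finset (Fin n))) (hcard : #s = #sᶜ)
    (hne : s.Nonempty) (hw : ∑ i, w.2 i = 0) :
    Nat.card {v : Wreath r n // v.1.IsCycleOn Set.univ ∧ v * bar v = w} = #s * r := by
  have : Nonempty (Fin n) := hne.to_type
  classical
  calc Nat.card {v : Wreath r n // v.1.IsCycleOn Set.univ ∧ v * bar v = w}
      = ∑ σ : {σ : Equiv.Perm (Fin n) // σ.IsCycleOn Set.univ ∧ σ ^ 2 = w.1},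
          Nat.card {z : Fin n → ZMod r // ∀ i, z (σ.1 i) = z i + w.2 i} := by
        rw [Nat.card_congr (absSqrtEquivSigma w), Nat.card_sigma]
    _ = ∑ _σ : {σ : Equiv.Perm (Fin n) // σ.IsCycleOn Set.univ ∧ σ ^ 2 = w.1}, r :=
        sum_congr rfl fun σ _ => by rw [card_apply_eq_add σ.2.1 hw, Nat.card_zmod]
    _ = #s * r := by
        rw [sum_const, card_univ, ← Nat.card_eq_fintype_card,
          card_isCycleOn_univ_and_sq_eq hs hsc hcard hne, smul_eq_mul]

end Wreath

/-- **Absolute squares of single cycles, even length** (Observation, part 2):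
for even `d = 2e`, if `v = (σ,z) ∈ G(r,d)` with `σ` a `d`-cycle, then `w := v·v̄`
has `|w| = σ²` a product of two disjoint `e`-cycles whose supports partition
`{1,…,d}`, and total color `0`; and every `w` with `|w|` a product of two disjoint
`e`-cycles covering `{1,…,d}` and total color `0` arises from exactly
`r·d/2 = r·e` such `v`. -/
theorem absolute_square_of_even_cycle
    (r e : ℕ) [NeZero r] (he : 0 < e) :
    (∀ v : Wreath r (2 * e), IsFullCycle v.1 →
      (v * Wreath.bar v).1 = v.1 ^ 2 ∧ IsTwoCycles (v * Wreath.bar v).1 e ∧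
        ∑ i, (v * Wreath.bar v).2 i = 0) ∧
    (∀ w : Wreath r (2 * e), IsTwoCycles w.1 e → ∑ i, w.2 i = 0 →
      Nat.card {v : Wreath r (2 * e) // IsFullCycle v.1 ∧ v * Wreath.bar v = w} =
        r * (2 * e) / 2) := by
  simp only [isFullCycle_iff_isCycleOn_univ, isTwoCycles_iff_exists_isCycleOn_compl]
  constructor
  · intro v hv
    have : Nonempty (Fin (2 * e)) := ⟨⟨0, by omega⟩⟩
    refine ⟨Wreath.fst_mul_bar v, ?_, Wreath.sum_snd_mul_bar v⟩
    rw [Wreath.fst_mul_bar]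
    exact exists_isCycleOn_sq_compl hv (by simp)
  · rintro w ⟨s, hne, hcard, hs, hsc⟩ hw
    have card_eq : #s = e := by simpa using two_mul_card_of_card_eq_card_compl hcard
    rw [Wreath.card_isCycleOn_univ_and_mul_bar_eq hs hsc hcard hne hw, card_eq, mul_left_comm,
      Nat.mul_div_cancel_left _ two_pos, mul_comm]
end

section
/- The dimension of the Gelfand model of G(r,n), i.e. the sum ∑_{χ ∈ Irr(G(r,n))} χ(id) of the dimensions of all irreducible complex representations of G(r,n), equals the number of absolute involutions in G(r,n), i.e. #{ v ∈ G(r,n) : v·v̄ = id }. -/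
open Finset CategoryTheory

/-!
For a finite group `G` with an automorphism `θ` such that `(θ g)⁻¹` is always conjugate to `g`,
the twisted Frobenius–Schur sum `∑ g, χ (g * θ g)` of an irreducible character `χ` is `±|G|`,
according to whether the `θ`-invariant bilinear form on the representation is symmetric or
alternating. If the form is always symmetric, the second orthogonality relation
`∑ χ, χ 1 * χ g = |G| * [g = 1]` counts the solutions of `g * θ g = 1` as `∑ χ, χ 1`.

For `θ = bar` on `G(r, n)`, symmetry is proved by induction on `n`. A reflection of the orbits of
`v` on `{1, …, n} × ℤ/r` fixing a base point shows that `v` and `(bar v)⁻¹` are conjugate under an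
element of `G(r, n - 1)`. Hence the adjoint `ρ (bar v)⁻¹` of `ρ v` has the same average over
`G(r, n - 1)` as `ρ v`, so every endomorphism commuting with `G(r, n - 1)` is self-adjoint. This
applies to the projections onto the irreducible constituents of the restriction to `G(r, n - 1)`,
which reduces symmetry of the form to these constituents.
-/

section CommutativeAction

variable {A X : Type*} [CommGroup A]

/-- An action of an abelian group has an involution intertwining each element with its inverse:
reflect each orbit in a base point. -/
theorem exists_involutive_smul_eq_inv_smul [MulAction A X] (x₀ : X) :
    ∃ k : X → X, Function.Involutive k ∧ k x₀ = x₀ ∧ ∀ (a : A) (x : X), k (a • x) = a⁻¹ • k x := by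
  classical
  let π : X → MulAction.orbitRel.Quotient A X := Quotient.mk _
  let base : MulAction.orbitRel.Quotient A X → X := Function.update Quotient.out (π x₀) x₀
  have π_base (q) : π (base q) = q := by
    rcases eq_or_ne q (π x₀) with rfl | hq
    · simp only [base, Function.update_self]
    · simp only [base, Function.update_of_ne hq]
      exact Quotient.out_eq q
  have π_smul (a : A) (x : X) : π (a • x) = π x := Quotient.sound ⟨a, rfl⟩
  have exists_move (x : X) : ∃ a : A, a • base (π x) = x := Quotient.exact (π_base (π x)).symm
  choose move move_smul using exists_move
  have reflect (a : A) (q) : (move (a • base q))⁻¹ • base q = a⁻¹ • base q := by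
    have h := move_smul (a • base q)
    rw [π_smul, π_base] at h
    rw [inv_smul_eq_iff, smul_comm, h, inv_smul_smul]
  have reflect_smul (a : A) (x : X) :
      (move (a • x))⁻¹ • base (π x) = a⁻¹ • (move x)⁻¹ • base (π x) := by
    conv_lhs => rw [← move_smul x, smul_smul, π_smul, π_base]
    rw [reflect, mul_inv, mul_smul]
  refine ⟨fun x ↦ (move x)⁻¹ • base (π x), fun x ↦ ?_, ?_, fun a x ↦ ?_⟩
  · dsimp only
    rw [π_smul, π_base, reflect, inv_inv, move_smul]
  · have h : base (π x₀) = x₀ := by simp only [base, Function.update_self]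
    dsimp only
    have := move_smul x₀
    rw [h] at this ⊢
    rw [inv_smul_eq_iff, this]
  · dsimp only
    rw [π_smul, reflect_smul]

/-- Applied to the abelian group generated by `s` and a family commuting with it, the reflection
of orbits conjugates `s` and the whole family to their inverses. -/
theorem exists_involutive_of_commute {s : Equiv.Perm X} {f : A →* Equiv.Perm X}
    (comm : ∀ a, Commute s (f a)) (x₀ : X) :
    ∃ k : X → X, Function.Involutive k ∧ k x₀ = x₀ ∧ (∀ x, k (s x) = s⁻¹ (k x)) ∧
      ∀ a x, k (f a x) = f a⁻¹ (k x) := by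
  let F : Multiplicative ℤ × A →* Equiv.Perm X :=
    (zpowersHom _ s).noncommCoprod f fun m a ↦ (comm a).zpow_left m.toAdd
  let := MulAction.compHom X F
  obtain ⟨k, k_invol, k_x₀, k_smul⟩ :=
    exists_involutive_smul_eq_inv_smul (A := Multiplicative ℤ × A) x₀
  have F_zpowers : F (.ofAdd 1, 1) = s :=
    (MonoidHom.noncommCoprod_apply ..).trans (by simp)
  have F_family (a : A) : F (1, a) = f a :=
    (MonoidHom.noncommCoprod_apply ..).trans (by simp)
  refine ⟨k, k_invol, k_x₀, fun x ↦ ?_, fun a x ↦ ?_⟩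
  · rw [← F_zpowers, ← map_inv]
    exact k_smul _ x
  · rw [← F_family, map_inv f, ← F_family, ← map_inv F]
    exact k_smul _ x

end CommutativeAction

namespace Wreath

variable {r n : ℕ}

theorem barAut_apply (v : Wreath r n) : barAut v = bar v :=
  rfl

instance : MulAction (Wreath r n) (Fin n × ZMod r) where
  smul g x := (g.1 x.1, x.2 + g.2 x.1)
  one_smul x := Prod.ext rfl (add_zero _)
  mul_smul g h x := Prod.ext rfl (by
    change x.2 + (g.2 (h.1 x.1) + h.2 x.1) = x.2 + h.2 x.1 + g.2 (h.1 x.1)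
    ring)

/-- The realization of `ℤ_r ≀ S_n` by coloured permutations of `{1, …, n} × ℤ/r`: the pair
`(σ, z)` acts by `(i, a) ↦ (σ i, a + z i)`. -/
def toColouredPerm : Wreath r n →* Equiv.Perm (Fin n × ZMod r) :=
  MulAction.toPermHom (Wreath r n) (Fin n × ZMod r)

theorem toColouredPerm_apply (g : Wreath r n) (i : Fin n) (a : ZMod r) :
    toColouredPerm g (i, a) = (g.1 i, a + g.2 i) :=
  rfl

/-- The translations `(i, a) ↦ (i, a + t)` of the colour, which commute with all coloured
permutations. -/
def colourShift : Multiplicative (ZMod r) →* Equiv.Perm (Fin n × ZMod r) where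
  toFun t := (Equiv.refl (Fin n)).prodCongr (Equiv.addRight t.toAdd)
  map_one' := Equiv.ext fun x ↦ Prod.ext rfl (add_zero x.2)
  map_mul' s t := Equiv.ext fun x ↦ Prod.ext rfl (by
    change x.2 + (s.toAdd + t.toAdd) = x.2 + t.toAdd + s.toAdd
    ring)

theorem colourShift_apply (t : Multiplicative (ZMod r)) (x : Fin n × ZMod r) :
    colourShift t x = (x.1, x.2 + t.toAdd) :=
  rfl

theorem commute_toColouredPerm_colourShift (g : Wreath r n) (t : Multiplicative (ZMod r)) :
    Commute (toColouredPerm g) (colourShift t) :=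
  Equiv.ext fun x ↦ Prod.ext rfl (add_right_comm x.2 t.toAdd (g.2 x.1))

/-- The coloured permutation `h` is the restriction to colour `0` of a reflection of the
`g`-orbits commuting with the colours up to sign. -/
theorem exists_mul_eq_bar_inv_mul (g : Wreath r n) (p : Fin n) :
    ∃ h : Wreath r n, h * g = (bar g)⁻¹ * h ∧ h.1 p = p ∧ h.2 p = 0 := by
  obtain ⟨k, k_invol, k_p, k_perm, k_colour⟩ :=
    exists_involutive_of_commute (commute_toColouredPerm_colourShift g) (p, 0)
  have k_apply (i : Fin n) (a : ZMod r) : k (i, a) = ((k (i, 0)).1, (k (i, 0)).2 - a) := by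
    have := k_colour (.ofAdd a) (i, 0)
    simpa only [colourShift_apply, toAdd_ofAdd, toAdd_inv, zero_add, ← sub_eq_add_neg] using this
  have τ_invol : Function.Involutive fun i ↦ (k (i, 0)).1 := fun i ↦ by
    have := k_invol (i, 0)
    rw [← Prod.mk.eta (p := k (i, 0)), k_apply] at this
    exact congrArg Prod.fst this
  let h : Wreath r n := ⟨τ_invol.toPerm, fun i ↦ -(k (i, 0)).2⟩
  have bar_mul_mul : bar g * (h * g) = h := by
    have reflect (i : Fin n) : toColouredPerm g (k (g.1 i, 0 + g.2 i)) = k (i, 0) := by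
      rw [← toColouredPerm_apply, k_perm, ← Equiv.Perm.mul_apply, mul_inv_cancel,
        Equiv.Perm.one_apply]
    simp only [k_apply _ (_ + _), toColouredPerm_apply] at reflect
    refine Prod.ext (Equiv.ext fun i ↦ congrArg Prod.fst (reflect i)) (funext fun i ↦ ?_)
    have := congrArg Prod.snd (reflect i)
    change -g.2 (k (g.1 i, 0)).1 + (-(k (g.1 i, 0)).2 + g.2 i) = -(k (i, 0)).2
    rw [← this]
    ring
  exact ⟨h, eq_inv_mul_of_mul_eq bar_mul_mul, congrArg Prod.fst k_p, by simp [h, k_p]⟩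

/-- The inclusion `G(r, n) ⊆ G(r, n + 1)` as the elements fixing the new point `0` with
colour `0`. -/
def consHom : Wreath r n →* Wreath r (n + 1) :=
  MonoidHom.mk' (fun v ↦ ⟨Equiv.Perm.decomposeFin.symm (0, v.1), Fin.cons 0 v.2⟩) fun v w ↦ by
    refine (Prod.ext (Equiv.ext (Fin.cases ?_ fun i ↦ ?_))
      (funext (Fin.cases ?_ fun i ↦ ?_))).trans (mul_def _ _).symm <;>
    simp [mul_def]

theorem consHom_bar (v : Wreath r n) : consHom (bar v) = bar (consHom v) :=
  Prod.ext rfl (funext (Fin.cases neg_zero.symm fun _ ↦ rfl))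

theorem mem_range_consHom {v : Wreath r (n + 1)} (hσ : v.1 0 = 0) (hz : v.2 0 = 0) :
    v ∈ consHom.range := by
  obtain ⟨⟨p, τ⟩, hτ⟩ := Equiv.Perm.decomposeFin.symm.surjective v.1
  obtain rfl : p = 0 := by rw [← Equiv.Perm.decomposeFin_symm_apply_zero p τ, hτ, hσ]
  exact ⟨⟨τ, Fin.tail v.2⟩, Prod.ext hτ (by rw [← Fin.cons_self_tail v.2, hz]; rfl)⟩

end Wreath

section Burnside

open scoped MonoidAlgebra

variable {k G V : Type*} [Field k] [IsAlgClosed k] [Monoid G] [AddCommGroup V] [Module k V]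
  [FiniteDimensional k V] (ρ : Representation k G V) [ρ.IsIrreducible]

theorem asAlgebraHom_surjective_of_isIrreducible : Function.Surjective ρ.asAlgebraHom := by
  intro T
  let D := Module.End k[G] ρ.asModule
  have scalar : Function.Bijective (algebraMap k D) :=
    IsSimpleModule.algebraMap_end_bijective_of_isAlgClosed k
  have : Module.Finite k ρ.asModule := inferInstanceAs (Module.Finite k V)
  have : Module.Finite D ρ.asModule := Module.Finite.of_restrictScalars_finite k D ρ.asModule
  let T' : Module.End D ρ.asModule :=
    { toFun v := ρ.asModuleEquiv.symm (T (ρ.asModuleEquiv v))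
      map_add' _ _ := by simp only [map_add]
      map_smul' d v := by
        obtain ⟨c, rfl⟩ := scalar.surjective d
        simp only [algebraMap_smul, map_smul, RingHom.id_apply] }
  obtain ⟨a, ha⟩ := Module.Finite.toModuleEnd_moduleEnd_surjective T'
  refine ⟨a, LinearMap.ext fun v ↦ ?_⟩
  have := congrArg ρ.asModuleEquiv (LinearMap.congr_fun ha (ρ.asModuleEquiv.symm v))
  simpa [T'] using this

theorem span_range_eq_top_of_isIrreducible : Submodule.span k (Set.range ρ) = ⊤ := by
  refine eq_top_iff.mpr fun T _ ↦ ?_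
  obtain ⟨a, rfl⟩ := asAlgebraHom_surjective_of_isIrreducible ρ T
  rw [Representation.asAlgebraHom_def, MonoidAlgebra.lift_apply]
  exact Submodule.sum_mem _ fun g _ ↦ Submodule.smul_mem _ _ (Submodule.subset_span ⟨g, rfl⟩)

end Burnside

section TwistedForms

open LinearMap (BilinForm IsAdjointPair)

variable {k G K V : Type*} [Field k] [Group G] [Group K] [AddCommGroup V] [Module k V]

/-- A bilinear form on a representation `ρ` is *`θ`-invariant* if it is a `G`-equivariant pairing
of `ρ` with its twist `ρ ∘ θ`. -/
def IsTwistedInvariant (θ : G ≃* G) (ρ : Representation k G V) (B : BilinForm k V) : Prop :=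
  ∀ g v w, B (ρ g v) (ρ (θ g) w) = B v w

namespace IsTwistedInvariant

variable {θ : G ≃* G} {ρ : Representation k G V} {B : BilinForm k V}

theorem isAdjointPair (hB : IsTwistedInvariant θ ρ B) (g : G) :
    IsAdjointPair B B (ρ g) (ρ (θ g)⁻¹) := fun v w ↦ by
  rw [← hB g v, ← Module.End.mul_apply, ← map_mul, mul_inv_cancel, map_one, Module.End.one_apply]

theorem comp (hB : IsTwistedInvariant θ ρ B) {θK : K ≃* K} {φ : K →* G}
    (hφ : ∀ x, φ (θK x) = θ (φ x)) : IsTwistedInvariant θK (ρ.comp φ) B := fun x v w ↦ by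
  simpa only [MonoidHom.comp_apply, hφ] using hB (φ x) v w

theorem isAdjointPair_norm [Fintype G] (hB : IsTwistedInvariant θ ρ B) {S T : Module.End k V}
    (h : IsAdjointPair B B S T) :
    IsAdjointPair B B ((ρ.linHom ρ).norm S) ((ρ.linHom ρ).norm T) := fun v w ↦ by
  simp only [Representation.norm, LinearMap.sum_apply, map_sum, Representation.linHom_apply,
    LinearMap.comp_apply]
  rw [← Equiv.sum_comp θ.toEquiv fun g ↦ B v (ρ g (T (ρ g⁻¹ w)))]
  refine Finset.sum_congr rfl fun g _ ↦ ?_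
  simp only [MulEquiv.toEquiv_eq_coe, MulEquiv.coe_toEquiv]
  have adjoint_inv := hB.isAdjointPair g⁻¹
  rw [map_inv θ, inv_inv] at adjoint_inv
  rw [hB.isAdjointPair g, h, adjoint_inv]

end IsTwistedInvariant

theorem norm_linHom_of_commute [Fintype K] {σ : Representation k K V} {T : Module.End k V}
    (hT : ∀ x, Commute (σ x) T) : (σ.linHom σ).norm T = Nat.card K • T := by
  have fixed (x : K) : σ.linHom σ x T = T := by
    rw [Representation.linHom_apply, ← Module.End.mul_eq_comp, ← Module.End.mul_eq_comp,
      ← mul_assoc, (hT x).eq, mul_assoc, ← map_mul, mul_inv_cancel, map_one, mul_one]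
  simp only [Representation.norm, LinearMap.sum_apply, fixed, sum_const, card_univ,
    Nat.card_eq_fintype_card]

/-- Averaging over `K` cannot tell `ρ g` from its adjoint `ρ (θ g)⁻¹`, and the `ρ g` span
all endomorphisms. -/
theorem IsTwistedInvariant.isSelfAdjoint_of_commute [IsAlgClosed k] [FiniteDimensional k V]
    [Finite K] [NeZero (Nat.card K : k)] {θ : G ≃* G} {ρ : Representation k G V}
    [ρ.IsIrreducible] {B : BilinForm k V} (hB : IsTwistedInvariant θ ρ B) {θK : K ≃* K}
    {φ : K →* G} (hφ : ∀ x, φ (θK x) = θ (φ x)) (conj : ∀ g, ∃ x, φ x * g = (θ g)⁻¹ * φ x)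
    {T : Module.End k V} (hT : ∀ x, Commute (ρ (φ x)) T) : B.IsSelfAdjoint T := by
  have := Fintype.ofFinite K
  let σ : Representation k K V := ρ.comp φ
  let E := (σ.linHom σ).norm
  have E_adjoint (g : G) : E (ρ (θ g)⁻¹) = E (ρ g) := by
    obtain ⟨x, hx⟩ := conj g
    have : ρ (θ g)⁻¹ = σ.linHom σ x (ρ g) := by
      rw [Representation.linHom_apply, ← Module.End.mul_eq_comp, ← Module.End.mul_eq_comp,
        MonoidHom.comp_apply, MonoidHom.comp_apply, ← map_mul, ← map_mul, map_inv φ, ← mul_assoc,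
        hx, mul_inv_cancel_right]
    rw [this, Representation.norm_self_apply]
  have E_selfAdjoint : ⊤ ≤ B.selfAdjointSubmodule.comap E := by
    rw [← span_range_eq_top_of_isIrreducible ρ, Submodule.span_le]
    rintro _ ⟨g, rfl⟩
    have := (hB.comp hφ).isAdjointPair_norm (hB.isAdjointPair g)
    rwa [E_adjoint] at this
  have : (Nat.card K : k) • T ∈ B.selfAdjointSubmodule := by
    rw [Nat.cast_smul_eq_nsmul, ← norm_linHom_of_commute (σ := σ) hT]
    exact E_selfAdjoint (x := T) trivial
  exact (Submodule.smul_mem_iff _ (NeZero.ne _)).mp this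

end TwistedForms

section Restriction

open scoped MonoidAlgebra
open LinearMap (BilinForm)

theorem isIrreducible_toRepresentation_ofSubmodule' {k G V : Type*} [Field k] [Monoid G]
    [AddCommGroup V] [Module k V] {ρ : Representation k G V} (U : Submodule k[G] ρ.asModule)
    [IsSimpleModule k[G] U] :
    (Subrepresentation.ofSubmodule' U).toRepresentation.IsIrreducible := by
  let W := Subrepresentation.ofSubmodule' U
  let incl : W.toRepresentation.IntertwiningMap ρ := ⟨W.toSubmodule.subtype, fun _ ↦ rfl⟩
  let f := Representation.IntertwiningMap.equivLinearMapAsModule _ _ incl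
  have f_inj : Function.Injective f := W.toSubmodule.injective_subtype
  have f_range : LinearMap.range f = U :=
    SetLike.coe_injective (Set.range_eq_iff _ _ |>.mpr ⟨fun u ↦ u.2, fun u hu ↦ ⟨⟨u, hu⟩, rfl⟩⟩)
  have e := (LinearEquiv.ofInjective f f_inj).trans (LinearEquiv.ofEq _ _ f_range)
  exact (Representation.irreducible_iff_isSimpleModule_asModule _).mpr (IsSimpleModule.congr e)

theorem induction_on_irreducible {k G V : Type*} [Field k] [Group G] [Finite G]
    [NeZero (Nat.card G : k)] [AddCommGroup V] [Module k V] (ρ : Representation k G V)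
    {motive : V → Prop} (zero : motive 0) (add : ∀ u v, motive u → motive v → motive (u + v))
    (mem : ∀ (W : Subrepresentation ρ) [W.toRepresentation.IsIrreducible], ∀ u ∈ W, motive u)
    (v : V) : motive v := by
  have v_mem : ρ.asModuleEquiv.symm v ∈
      sSup {U : Submodule k[G] ρ.asModule | IsSimpleModule k[G] U} := by
    rw [IsSemisimpleModule.sSup_simples_eq_top]
    trivial
  rw [sSup_eq_iSup'] at v_mem
  refine Submodule.iSup_induction _ (motive := fun v ↦ motive (ρ.asModuleEquiv v)) v_mem
    (fun U u hu ↦ ?_) zero add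
  have : IsSimpleModule k[G] U.1 := U.2
  have := isIrreducible_toRepresentation_ofSubmodule' U.1
  exact mem (Subrepresentation.ofSubmodule' U.1) u hu

theorem exists_equivariant_projection {k G V : Type*} [Field k] [Group G] [Finite G]
    [NeZero (Nat.card G : k)] [AddCommGroup V] [Module k V] {ρ : Representation k G V}
    (W : Subrepresentation ρ) :
    ∃ P : Module.End k V, (∀ g, Commute (ρ g) P) ∧ (∀ v, P v ∈ W) ∧ ∀ u ∈ W, P u = u := by
  obtain ⟨Z, hWZ⟩ := exists_isCompl W.asSubmodule
  let P := (Representation.IntertwiningMap.equivLinearMapAsModule ρ ρ).symm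
    (W.asSubmodule.projection Z hWZ)
  exact ⟨P.toLinearMap, fun g ↦ (P.isIntertwining' g).symm,
    fun v ↦ Submodule.projection_apply_mem hWZ v,
    fun u hu ↦ Submodule.projection_apply_of_mem_left hWZ hu⟩

universe u

/-- The bilinear forms invariant under the twist `θ` are symmetric on all irreducible
representations: no twisted Frobenius–Schur indicator equals `-1`. -/
def TwistedFormsSymmetric (k : Type u) [Field k] {G : Type*} [Group G] (θ : G ≃* G) : Prop :=
  ∀ (V : Type u) [AddCommGroup V] [Module k V] [FiniteDimensional k V]
    (ρ : Representation k G V) [ρ.IsIrreducible] (B : BilinForm k V),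
    IsTwistedInvariant θ ρ B → ∀ v w, B v w = B w v

variable {k : Type u} [Field k] [IsAlgClosed k] {G K : Type*} [Group G] [Group K]

theorem twistedFormsSymmetric_of_isMulCommutative [IsMulCommutative G] (θ : G ≃* G) :
    TwistedFormsSymmetric k θ := by
  intro V _ _ _ ρ _ B _ v w
  obtain ⟨e, he⟩ := finrank_eq_one_iff'.mp
    (Representation.IsIrreducible.finrank_eq_one_of_isMulCommutative ρ)
  obtain ⟨a, rfl⟩ := he.2 v
  obtain ⟨b, rfl⟩ := he.2 w
  simp only [map_smul, LinearMap.smul_apply, smul_eq_mul]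
  ring

/-- The equivariant projection onto `W` is self-adjoint, so only the restriction of `B` to `W`
matters. -/
theorem TwistedFormsSymmetric.apply_comm_of_mem [Finite K] [NeZero (Nat.card K : k)]
    {θ : G ≃* G} {θK : K ≃* K} (symm : TwistedFormsSymmetric k θK) {φ : K →* G}
    (hφ : ∀ x, φ (θK x) = θ (φ x)) (conj : ∀ g, ∃ x, φ x * g = (θ g)⁻¹ * φ x)
    {V : Type u} [AddCommGroup V] [Module k V] [FiniteDimensional k V] {ρ : Representation k G V}
    [ρ.IsIrreducible] {B : BilinForm k V} (hB : IsTwistedInvariant θ ρ B)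
    (W : Subrepresentation (ρ.comp φ : Representation k K V)) [W.toRepresentation.IsIrreducible]
    {u : V} (hu : u ∈ W) (w : V) : B u w = B w u := by
  obtain ⟨P, P_comm, P_mem, P_id⟩ := exists_equivariant_projection W
  have P_adj : B.IsSelfAdjoint P := hB.isSelfAdjoint_of_commute hφ conj P_comm
  have symm_W : ∀ v w : W.toSubmodule, B v w = B w v :=
    symm _ W.toRepresentation (B.domRestrict₁₂ W.toSubmodule W.toSubmodule)
      fun x v w ↦ hB.comp hφ x v w
  calc B u w = B (P u) w := by rw [P_id u hu]
    _ = B u (P w) := P_adj u w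
    _ = B (P w) u := symm_W ⟨u, hu⟩ ⟨P w, P_mem w⟩
    _ = B w (P u) := P_adj w u
    _ = B w u := by rw [P_id u hu]

/-- Symmetry of twisted forms propagates from `K` to `G`: the restriction of an irreducible
representation to `K` is a sum of irreducibles. -/
theorem TwistedFormsSymmetric.of_hom [Finite K] [NeZero (Nat.card K : k)] {θ : G ≃* G}
    {θK : K ≃* K} (symm : TwistedFormsSymmetric k θK) {φ : K →* G}
    (hφ : ∀ x, φ (θK x) = θ (φ x)) (conj : ∀ g, ∃ x, φ x * g = (θ g)⁻¹ * φ x) :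
    TwistedFormsSymmetric k θ := by
  intro V _ _ _ ρ _ B hB v w
  let σ : Representation k K V := ρ.comp φ
  induction v using induction_on_irreducible σ with
  | zero => rw [LinearMap.map_zero₂, map_zero]
  | add v₁ v₂ h₁ h₂ => rw [LinearMap.map_add₂, map_add, h₁, h₂]
  | mem W u hu => exact symm.apply_comm_of_mem hφ conj hB W hu w

end Restriction

theorem Wreath.twistedFormsSymmetric_barAut (r n : ℕ) [NeZero r] :
    TwistedFormsSymmetric ℂ (barAut : Wreath r n ≃* Wreath r n) := by
  induction n with
  | zero =>
    have : Subsingleton (Wreath r 0) :=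
      inferInstanceAs (Subsingleton (Equiv.Perm (Fin 0) × (Fin 0 → ZMod r)))
    have : IsMulCommutative (Wreath r 0) := ⟨⟨fun _ _ ↦ Subsingleton.elim _ _⟩⟩
    exact twistedFormsSymmetric_of_isMulCommutative _
  | succ n ih =>
    refine ih.of_hom (φ := consHom) consHom_bar fun g ↦ ?_
    obtain ⟨h, h_mul, h_fst, h_snd⟩ := exists_mul_eq_bar_inv_mul g 0
    obtain ⟨x, rfl⟩ := mem_range_consHom h_fst h_snd
    exact ⟨x, h_mul⟩

section TwistedIndicator

open LinearMap (BilinForm)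

universe u

variable {k : Type u} {G : Type*} [Field k] [Group G]

/-- The average, up to the factor `|G|`, of the form `(u, w) ↦ φ u * ψ w` over the action of `G`
through `ρ` on the left and through `ρ ∘ θ` on the right. -/
def twistedPairing [Fintype G] {V : Type*} [AddCommGroup V] [Module k V] (θ : G ≃* G)
    (ρ : Representation k G V) (φ ψ : Module.Dual k V) : BilinForm k V :=
  ∑ g, (LinearMap.mul k k).compl₁₂ (φ ∘ₗ ρ g) (ψ ∘ₗ ρ (θ g))

theorem twistedPairing_apply [Fintype G] {V : Type*} [AddCommGroup V] [Module k V] (θ : G ≃* G)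
    (ρ : Representation k G V) (φ ψ : Module.Dual k V) (u w : V) :
    twistedPairing θ ρ φ ψ u w = ∑ g, φ (ρ g u) * ψ (ρ (θ g) w) := by
  simp only [twistedPairing, LinearMap.sum_apply, LinearMap.compl₁₂_apply, LinearMap.comp_apply,
    LinearMap.mul_apply']

theorem isTwistedInvariant_twistedPairing [Fintype G] {V : Type*} [AddCommGroup V] [Module k V]
    (θ : G ≃* G) (ρ : Representation k G V) (φ ψ : Module.Dual k V) :
    IsTwistedInvariant θ ρ (twistedPairing θ ρ φ ψ) := fun h u w ↦ by
  rw [twistedPairing_apply, twistedPairing_apply]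
  refine Fintype.sum_equiv (Equiv.mulRight h) _ _ fun g ↦ ?_
  simp only [Equiv.coe_mulRight, map_mul, Module.End.mul_apply]

/-- Expanding in a basis `b` with dual basis `φ`, the left side is the sum over `i, j` of
`twistedPairing θ ρ (φ i) (φ j)` at `(b j, b i)`, and the right side the same sum at
`(b i, b j)`. -/
theorem TwistedFormsSymmetric.sum_character_mul_map [Fintype G] {θ : G ≃* G}
    (symm : TwistedFormsSymmetric k θ) {V : Type u} [AddCommGroup V] [Module k V]
    [FiniteDimensional k V] (ρ : Representation k G V) [ρ.IsIrreducible] :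
    ∑ g, ρ.character (g * θ g) = ∑ g, ρ.character g * ρ.character (θ g) := by
  let b := Module.finBasis k V
  let B i j := twistedPairing θ ρ (b.coord i) (b.coord j)
  have character_eq (g : G) : ρ.character g = ∑ i, b.coord i (ρ g (b i)) := by
    simp only [Representation.character, LinearMap.trace_eq_matrix_trace k b, Matrix.trace,
      Matrix.diag_apply, LinearMap.toMatrix_apply, Module.Basis.coord_apply]
  have character_mul_eq (g h : G) : ρ.character (g * h) =
      ∑ i, ∑ j, b.coord i (ρ g (b j)) * b.coord j (ρ h (b i)) := by
    simp only [Representation.character, LinearMap.trace_eq_matrix_trace k b, map_mul,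
      LinearMap.toMatrix_mul, Matrix.trace, Matrix.diag_apply, Matrix.mul_apply,
      LinearMap.toMatrix_apply, Module.Basis.coord_apply]
  calc ∑ g, ρ.character (g * θ g) = ∑ i, ∑ j, B i j (b j) (b i) := by
        simp only [character_mul_eq, B, twistedPairing_apply]
        rw [sum_comm]
        exact sum_congr rfl fun i _ ↦ sum_comm
    _ = ∑ i, ∑ j, B i j (b i) (b j) := by
        refine sum_congr rfl fun i _ ↦ sum_congr rfl fun j _ ↦ ?_
        exact symm V ρ _ (isTwistedInvariant_twistedPairing θ ρ _ _) _ _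
    _ = ∑ g, ρ.character g * ρ.character (θ g) := by
        simp only [character_eq, B, twistedPairing_apply, sum_mul_sum]
        symm
        rw [sum_comm]
        exact sum_congr rfl fun i _ ↦ sum_comm

theorem sum_character_mul_character_inv [IsAlgClosed k] [Fintype G] [NeZero (Nat.card G : k)]
    {V : Type*} [AddCommGroup V] [Module k V] [FiniteDimensional k V] (ρ : Representation k G V)
    [ρ.IsIrreducible] : ∑ g, ρ.character g * ρ.character g⁻¹ = Nat.card G := by
  have : Invertible (Nat.card G : k) := invertibleOfNonzero (NeZero.ne _)
  have norm := Representation.char_orthonormal ρ ρ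
  rw [if_pos ⟨.refl ρ⟩] at norm
  exact ((inv_mul_eq_one₀ (NeZero.ne _)).mp norm).symm

theorem TwistedFormsSymmetric.sum_character_mul_map_eq_card [IsAlgClosed k] [Fintype G]
    [NeZero (Nat.card G : k)] {θ : G ≃* G} (symm : TwistedFormsSymmetric k θ)
    (conj : ∀ g, IsConj g (θ g)⁻¹) {V : Type u} [AddCommGroup V] [Module k V]
    [FiniteDimensional k V] (ρ : Representation k G V) [ρ.IsIrreducible] :
    ∑ g, ρ.character (g * θ g) = Nat.card G := by
  have character_map (g : G) : ρ.character (θ g) = ρ.character g⁻¹ := by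
    obtain ⟨h, hh⟩ := isConj_iff.mp (conj g⁻¹)
    rw [map_inv, inv_inv] at hh
    rw [← hh, Representation.char_conj]
  rw [symm.sum_character_mul_map ρ, ← sum_character_mul_character_inv ρ]
  simp only [character_map]

end TwistedIndicator

section Completeness

open scoped MonoidAlgebra

universe u

theorem isSimpleModule_of_finrank_end_eq_one {k A M : Type*} [Field k] [Ring A] [Algebra k A]
    [AddCommGroup M] [Module k M] [Module A M] [IsScalarTower k A M] [IsSemisimpleModule A M]
    (h : Module.finrank k (Module.End A M) = 1) : IsSimpleModule A M := by
  have : Nontrivial M := by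
    by_contra! hM
    rw [Module.finrank_zero_of_subsingleton] at h
    exact zero_ne_one h
  refine (isSimpleModule_iff _ _).mpr { eq_bot_or_eq_top := fun U ↦ ?_ }
  obtain ⟨W, hUW⟩ := exists_isCompl U
  obtain ⟨c, hc⟩ := (finrank_eq_one_iff_of_nonzero' (1 : Module.End A M) one_ne_zero).mp h
    (U.projection W hUW)
  have range_eq : LinearMap.range (c • (1 : Module.End A M)) = U := by
    rw [hc, Submodule.range_projection]
  rcases eq_or_ne c 0 with rfl | hc
  · left
    rw [← range_eq, zero_smul, LinearMap.range_zero]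
  · right
    rw [← range_eq, LinearMap.range_eq_top]
    exact fun v ↦ ⟨c⁻¹ • v, smul_inv_smul₀ hc v⟩

theorem simple_iff_isIrreducible {k G : Type u} [Field k] [IsAlgClosed k] [CharZero k] [Group G]
    [Finite G] (V : FDRep k G) : Simple V ↔ Representation.IsIrreducible V.ρ := by
  have := Fintype.ofFinite G
  rw [FDRep.simple_iff_char_is_norm_one]
  refine ⟨fun (h : ∑ g, Representation.character V.ρ g * Representation.character V.ρ g⁻¹ =
    Nat.card G) ↦ ?_, fun h ↦ sum_character_mul_character_inv (k := k) V.ρ⟩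
  have card_ne : (Nat.card G : k) ≠ 0 := NeZero.ne _
  have : Invertible (Nat.card G : k) := invertibleOfNonzero card_ne
  have finrank_eq := Representation.card_inv_mul_sum_char_mul_char_eq_finrank V.ρ V.ρ
  rw [h, inv_mul_cancel₀ card_ne] at finrank_eq
  rw [Representation.irreducible_iff_isSimpleModule_asModule]
  refine isSimpleModule_of_finrank_end_eq_one (k := k) ?_
  rw [← (Representation.IntertwiningMap.equivLinearMapAsModule V.ρ V.ρ).finrank_eq]
  exact_mod_cast finrank_eq.symm

theorem sum_smul_eq_zero_of_isIrreducible {k : Type u} {G : Type*} [Field k] [Group G]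
    [Fintype G] [NeZero (Nat.card G : k)] {f : G → k}
    (hf : ∀ (V : Type u) [AddCommGroup V] [Module k V] [FiniteDimensional k V]
      (ρ : Representation k G V) [ρ.IsIrreducible], ∑ g, f g • ρ g = 0)
    {V : Type u} [AddCommGroup V] [Module k V] [FiniteDimensional k V]
    (ρ : Representation k G V) : ∑ g, f g • ρ g = 0 := by
  ext v
  induction v using induction_on_irreducible ρ with
  | zero => exact map_zero _
  | add v₁ v₂ h₁ h₂ => rw [map_add, h₁, h₂, map_add]
  | mem W u hu =>
    have sum_eq_in_W := LinearMap.congr_fun (hf W.toSubmodule W.toRepresentation) ⟨u, hu⟩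
    have sum_eq := congrArg W.toSubmodule.subtype sum_eq_in_W
    simp only [LinearMap.sum_apply, LinearMap.smul_apply, map_sum, map_smul] at sum_eq ⊢
    exact sum_eq

/-- By Schur's lemma the left side is a scalar. -/
theorem sum_smul_eq_zero_of_sum_mul_character_eq_zero {k G V : Type*} [Field k] [IsAlgClosed k]
    [CharZero k] [Group G] [Fintype G] [AddCommGroup V] [Module k V] [FiniteDimensional k V]
    (ρ : Representation k G V) [ρ.IsIrreducible] {f : G → k}
    (f_conj : ∀ g h, f (h * g * h⁻¹) = f g) (hf : ∑ g, f g * ρ.character g = 0) :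
    ∑ g, f g • ρ g = 0 := by
  let P : ρ.IntertwiningMap ρ := ⟨∑ g, f g • ρ g, fun h ↦ by
    rw [← Module.End.mul_eq_comp, ← Module.End.mul_eq_comp, sum_mul, mul_sum]
    symm
    refine Fintype.sum_equiv (MulAut.conj h).toEquiv _ _ fun g ↦ ?_
    simp only [MulEquiv.toEquiv_eq_coe, MulEquiv.coe_toEquiv, MulAut.conj_apply, f_conj,
      smul_mul_assoc, mul_smul_comm, ← map_mul, inv_mul_cancel_right]⟩
  obtain ⟨c, hc⟩ :=
    Representation.IsIrreducible.algebraMap_intertwiningMap_bijective_of_isAlgClosed.surjective P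
  have sum_eq : ∑ g, f g • ρ g = c • (1 : Module.End k V) :=
    (congrArg Representation.IntertwiningMap.toLinearMap hc).symm
  have c_mul_finrank : c * Module.finrank k V = 0 := by
    rw [← hf, ← smul_eq_mul, ← LinearMap.trace_one, ← map_smul, ← sum_eq, map_sum]
    simp only [map_smul, smul_eq_mul, Representation.character]
  have : Nontrivial V := IsSimpleModule.nontrivial k[G] ρ.asModule
  have finrank_ne : (Module.finrank k V : k) ≠ 0 := Nat.cast_ne_zero.mpr Module.finrank_pos.ne'
  rw [sum_eq, (mul_eq_zero_iff_right finrank_ne).mp c_mul_finrank, zero_smul]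

theorem eq_zero_of_sum_mul_character_eq_zero {k G : Type u} [Field k] [IsAlgClosed k] [CharZero k]
    [Group G] [Fintype G] {f : G → k} (f_conj : ∀ g h, f (h * g * h⁻¹) = f g)
    (hf : ∀ (V : Type u) [AddCommGroup V] [Module k V] [FiniteDimensional k V]
      (ρ : Representation k G V) [ρ.IsIrreducible], ∑ g, f g * ρ.character g = 0) : f = 0 := by
  have sum_eq : ∑ g, f g • Representation.leftRegular k G g = 0 :=
    sum_smul_eq_zero_of_isIrreducible (fun V _ _ _ ρ _ ↦
      sum_smul_eq_zero_of_sum_mul_character_eq_zero ρ f_conj (hf V ρ)) _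
  have sum_single := LinearMap.congr_fun sum_eq (MonoidAlgebra.single 1 1)
  classical
  funext g
  simpa [Finsupp.finsetSum_apply, Finsupp.single_apply] using
    congrArg (fun x ↦ x.coeff g) sum_single

end Completeness

section CompleteFamily

variable {G : Type} [Group G] {ι : Type} {V : ι → FDRep ℂ G}

namespace IsCompleteIrrFamily

theorem sum_character_mul_character_inv [Fintype G] [DecidableEq ι]
    (hV : IsCompleteIrrFamily V) (i j : ι) :
    ∑ g, (V i).character g * (V j).character g⁻¹ = if i = j then (Nat.card G : ℂ) else 0 := by
  have card_ne : (Nat.card G : ℂ) ≠ 0 := NeZero.ne _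
  have : Invertible (Nat.card G : ℂ) := invertibleOfNonzero card_ne
  have := hV.1
  have orthonormal := FDRep.char_orthonormal (V i) (V j)
  rw [inv_mul_eq_iff_eq_mul₀ card_ne] at orthonormal
  rw [orthonormal]
  have iso_iff : Nonempty (V i ≅ V j) ↔ i = j := ⟨hV.2.1 i j, fun h ↦ h ▸ ⟨Iso.refl _⟩⟩
  simp only [iso_iff, mul_ite, mul_one, mul_zero]

theorem eq_zero_of_sum_mul_character_eq_zero [Fintype G] (hV : IsCompleteIrrFamily V)
    {f : G → ℂ} (f_conj : ∀ g h, f (h * g * h⁻¹) = f g)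
    (hf : ∀ j, ∑ g, f g * (V j).character g = 0) : f = 0 := by
  refine _root_.eq_zero_of_sum_mul_character_eq_zero f_conj fun W _ _ _ ρ _ ↦ ?_
  have : Simple (FDRep.of ρ) := (simple_iff_isIrreducible _).mpr ‹_›
  obtain ⟨j, ⟨e⟩⟩ := hV.2.2 (FDRep.of ρ) this
  rw [← hf j, FDRep.char_iso e]
  rfl

theorem sum_character_one_mul_character [Finite G] [Fintype ι] [DecidableEq G]
    (hV : IsCompleteIrrFamily V) (g : G) :
    ∑ i, (V i).character 1 * (V i).character g = if g = 1 then (Nat.card G : ℂ) else 0 := by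
  classical
  have := Fintype.ofFinite G
  let f (g : G) : ℂ :=
    ∑ i, (V i).character 1 * (V i).character g⁻¹ - if g = 1 then (Nat.card G : ℂ) else 0
  have f_conj (g h : G) : f (h * g * h⁻¹) = f g := by
    simp only [f, conj_inv, FDRep.char_conj, conj_eq_one_iff]
  have f_orthogonal (j : ι) : ∑ g, f g * (V j).character g = 0 := by
    simp only [f, sub_mul, sum_sub_distrib, sum_mul]
    rw [sum_comm]
    simp only [mul_assoc, ← mul_sum, mul_comm ((V _).character _⁻¹),
      hV.sum_character_mul_character_inv]
    simp [mul_comm]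
  have f_eq_zero := congrFun (hV.eq_zero_of_sum_mul_character_eq_zero f_conj f_orthogonal) g⁻¹
  simpa only [f, inv_inv, inv_eq_one, Pi.zero_apply, sub_eq_zero] using f_eq_zero

theorem sum_character_one_eq_card_mul_map_eq_one [Finite G] [Fintype ι]
    (hV : IsCompleteIrrFamily V) {θ : G ≃* G} (symm : TwistedFormsSymmetric ℂ θ)
    (conj : ∀ g, IsConj g (θ g)⁻¹) :
    ∑ i, (V i).character 1 = Nat.card {g : G // g * θ g = 1} := by
  classical
  have := Fintype.ofFinite G
  have indicator (i : ι) : ∑ g, (V i).character (g * θ g) = Nat.card G := by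
    have : Representation.IsIrreducible (V i).ρ := (simple_iff_isIrreducible _).mp (hV.1 i)
    exact symm.sum_character_mul_map_eq_card conj (V i).ρ
  refine mul_right_cancel₀ (NeZero.ne (Nat.card G : ℂ)) ?_
  calc (∑ i, (V i).character 1) * Nat.card G
      = ∑ g, ∑ i, (V i).character 1 * (V i).character (g * θ g) := by
        rw [sum_comm, sum_mul]
        simp only [← mul_sum, indicator]
    _ = Nat.card {g : G // g * θ g = 1} * Nat.card G := by
        simp only [hV.sum_character_one_mul_character, ← sum_filter, sum_const, nsmul_eq_mul]
        rw [Nat.card_eq_fintype_card (α := {g : G // g * θ g = 1}), Fintype.card_subtype]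

end IsCompleteIrrFamily

end CompleteFamily

/-- **Dimension of the Gelfand model** (Corollary `t.dim`): the sum of the dimensions
of all irreducible complex representations of `G(r,n)` (i.e. `∑_{χ∈Irr} χ(id)`)
equals the number of absolute involutions in `G(r,n)`. -/
theorem model_dimension_eq_card_absolute_involutions
    (r n : ℕ) [NeZero r] (hn : 0 < n)
    {ι : Type} [Fintype ι] (V : ι → FDRep ℂ (Wreath r n))
    (hV : IsCompleteIrrFamily V) :
    ∑ i, (V i).character 1 =
      (Nat.card {v : Wreath r n // v * Wreath.bar v = 1} : ℂ) := by
  have conj (g : Wreath r n) : IsConj g (Wreath.barAut g)⁻¹ := by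
    obtain ⟨h, h_mul, -⟩ := Wreath.exists_mul_eq_bar_inv_mul g ⟨0, hn⟩
    exact isConj_iff.mpr ⟨h, mul_inv_eq_of_eq_mul h_mul⟩
  simpa only [Wreath.barAut_apply] using
    hV.sum_character_one_eq_card_mul_map_eq_one (Wreath.twistedFormsSymmetric_barAut r n) conj
end

section
/- (Bump–Ginzburg generalized Frobenius–Schur formula) Let G be a finite group, let τ be an automorphism of G with τ² = id, and let z ∈ G with z² = id. If ∑_{χ ∈ Irr(G)} χ(id) = #{ w ∈ G : w·τ(w) = z }, then for every g ∈ G, ∑_{χ ∈ Irr(G)} χ(g) = #{ w ∈ G : w·τ(w) = g·z }. -/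
open CategoryTheory

/-!
The number `N x` of solutions of `w * τ w = x` is a class function, and its coefficient at an
irreducible character `χ` is the twisted indicator `ε = |G|⁻¹ ∑ w, χ (w * τ w)`. This is the trace
of the swap of the two tensor factors on the invariants of `V ⊗ V^τ`; by Schur's lemma these have
dimension at most one, so `ε ∈ {0, 1, -1}`. As `ρ z` is an involution, `ε χ(z) ≤ χ(1)`, and the
hypothesis, read as `∑ χ(1) = ∑ ε χ(z)`, forces equality for every `χ`. Equality means `ε ρ(z) = 1`,
hence `ε χ(g z) = χ(g)`, and summing over `χ` gives the claim.
-/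

open Module TensorProduct
open scoped MonoidAlgebra ComplexOrder

section Trace

theorem trace_comm_comp_map {R M : Type*} [CommRing R] [AddCommGroup M] [Module R M]
    [Module.Free R M] [Module.Finite R M] (f g : End R M) :
    LinearMap.trace R (M ⊗[R] M) ((TensorProduct.comm R M M).toLinearMap ∘ₗ map f g) =
      LinearMap.trace R M (f * g) := by
  classical
  let b := Module.Free.chooseBasis R M
  rw [LinearMap.trace_eq_matrix_trace R (b.tensorProduct b), LinearMap.trace_eq_matrix_trace R b,
    LinearMap.toMatrix_mul]
  simp only [Matrix.trace, Matrix.diag, LinearMap.toMatrix_apply, Matrix.mul_apply,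
    Fintype.sum_prod_type]
  rw [Finset.sum_comm]
  simp

theorem trace_eq_zero_or_mul_self_eq_one_of_finrank_le_one {R M : Type*} [CommRing R]
    [StrongRankCondition R] [AddCommGroup M] [Module R M] [Module.Free R M] [Module.Finite R M]
    (hM : finrank R M ≤ 1) {f : End R M} (hf : f * f = 1) :
    LinearMap.trace R M f = 0 ∨ LinearMap.trace R M f * LinearMap.trace R M f = 1 := by
  rcases Nat.le_one_iff_eq_zero_or_eq_one.mp hM with h0 | h1
  · have : Subsingleton M := (finrank_eq_zero_iff_of_free R M).mp h0
    exact .inl (by rw [Subsingleton.elim f 0, map_zero])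
  · obtain ⟨c, rfl, -⟩ := LinearMap.existsUnique_eq_smul_id_of_finrank_eq_one h1 f
    have hc := congrArg (LinearMap.trace R M) hf
    exact .inr (by simpa [h1, mul_smul_comm, ← End.one_eq_id] using hc)

theorem trace_comp_eq_zero_or_mul_self_eq_one {R M : Type*} [CommRing R] [IsDomain R]
    [IsPrincipalIdealRing R] [AddCommGroup M] [Module R M] [Module.Free R M] [Module.Finite R M]
    {p : Submodule R M} {P S : End R M} (hP : LinearMap.IsProj p P) (hp : finrank R p ≤ 1)
    (hS : S * S = 1) (hSp : ∀ x ∈ p, S x ∈ p) :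
    LinearMap.trace R M (S ∘ₗ P) = 0 ∨
      LinearMap.trace R M (S ∘ₗ P) * LinearMap.trace R M (S ∘ₗ P) = 1 := by
  have hSP : ∀ x, (S ∘ₗ P) x ∈ p := fun x => hSp _ (hP.map_mem x)
  have hrestrict : (S ∘ₗ P).restrict (fun x _ => hSP x) = S.restrict hSp :=
    LinearMap.ext fun x => Subtype.ext (congrArg S (hP.map_id x x.2))
  rw [← LinearMap.trace_restrict_eq_of_forall_mem p _ hSP, hrestrict]
  refine trace_eq_zero_or_mul_self_eq_one_of_finrank_le_one hp ?_
  exact LinearMap.ext fun x => Subtype.ext (LinearMap.congr_fun hS x)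

theorem exists_isIdempotentElem_eq_one_sub_two_smul {R A : Type*} [CommRing R] [Invertible (2 : R)]
    [Ring A] [Algebra R A] {a : A} (ha : a * a = 1) :
    ∃ p : A, IsIdempotentElem p ∧ a = 1 - (2 : R) • p := by
  refine ⟨⅟(2 : R) • (1 - a), ?_, by rw [smul_invOf_smul, sub_sub_cancel]⟩
  have hsq : (1 - a) * (1 - a) = (2 : R) • (1 - a) := by
    simp only [mul_sub, sub_mul, ha, one_mul, mul_one]
    module
  rw [IsIdempotentElem, smul_mul_smul_comm, hsq, mul_smul, invOf_smul_smul]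

variable {K V : Type*} [Field K] [AddCommGroup V] [Module K V] [FiniteDimensional K V]
  {f : End K V}

theorem trace_le_finrank_of_mul_self_eq_one [PartialOrder K] [IsStrictOrderedRing K]
    (hf : f * f = 1) : LinearMap.trace K V f ≤ finrank K V := by
  have := invertibleOfNonzero (two_ne_zero (α := K))
  obtain ⟨p, hp, rfl⟩ := exists_isIdempotentElem_eq_one_sub_two_smul (R := K) hf
  rw [map_sub, map_smul, LinearMap.trace_one,
    (LinearMap.IsIdempotentElem.isProj_range p hp).trace, sub_le_self_iff, smul_eq_mul]
  positivity

theorem eq_one_of_mul_self_eq_one_of_trace_eq_finrank [CharZero K] (hf : f * f = 1)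
    (htrace : LinearMap.trace K V f = finrank K V) : f = 1 := by
  have := invertibleOfNonzero (two_ne_zero (α := K))
  obtain ⟨p, hp, rfl⟩ := exists_isIdempotentElem_eq_one_sub_two_smul (R := K) hf
  have hp0 : p = 0 := by
    rw [← LinearMap.IsIdempotentElem.trace_eq_zero_iff hp]
    simpa [LinearMap.trace_one] using htrace
  rw [hp0, smul_zero, sub_zero]

end Trace

section TwistedSquare

variable {k G V : Type*} [CommRing k] [Group G] [AddCommGroup V] [Module k V]

/-- The tensor product `ρ ⊗ (ρ ∘ τ)` of a representation with its twist by an automorphism.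
An invariant vector of it is a bilinear form on the dual space that is invariant up to `τ`. -/
noncomputable def twistedSquare (τ : G ≃* G) (ρ : Representation k G V) :
    Representation k G (V ⊗[k] V) :=
  ρ.tprod (ρ.comp τ.toMonoidHom)

variable {τ : G ≃* G} (ρ : Representation k G V)

theorem comm_twistedSquare (hτ : Function.Involutive τ) (g : G) (x : V ⊗[k] V) :
    TensorProduct.comm k V V (twistedSquare τ ρ g x) =
      twistedSquare τ ρ (τ g) (TensorProduct.comm k V V x) := by
  induction x with
  | zero => simp only [map_zero]
  | add x y hx hy => simp only [map_add, hx, hy]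
  | tmul x y => simp [twistedSquare, hτ g]

theorem comm_mem_invariants_twistedSquare (hτ : Function.Involutive τ) {x : V ⊗[k] V}
    (hx : x ∈ (twistedSquare τ ρ).invariants) :
    TensorProduct.comm k V V x ∈ (twistedSquare τ ρ).invariants := fun g => by
  rw [← hτ g, ← comm_twistedSquare ρ hτ, hx]

end TwistedSquare

section TwistedIndicator

variable {k G V : Type*} [Field k] [Group G] [Fintype G] [AddCommGroup V] [Module k V]

/-- The `τ`-twisted Frobenius–Schur indicator of `ρ`; `τ = id` gives the classical indicator. -/
noncomputable def twistedIndicator (τ : G ≃* G) (ρ : Representation k G V) : k :=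
  (Nat.card G : k)⁻¹ * ∑ w, ρ.character (w * τ w)

variable [FiniteDimensional k V] {τ : G ≃* G} (ρ : Representation k G V)

theorem twistedIndicator_eq_trace_comm_comp_averageMap [Invertible (Fintype.card G : k)] :
    twistedIndicator τ ρ = LinearMap.trace k (V ⊗[k] V)
      ((TensorProduct.comm k V V).toLinearMap ∘ₗ (twistedSquare τ ρ).averageMap) := by
  have hchar (w : G) : ρ.character (w * τ w) = LinearMap.trace k (V ⊗[k] V)
      ((TensorProduct.comm k V V).toLinearMap ∘ₗ twistedSquare τ ρ w) := by
    rw [Representation.character, map_mul, ← trace_comm_comp_map]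
    rfl
  have haverage : (twistedSquare τ ρ).averageMap =
      (Nat.card G : k)⁻¹ • ∑ w, twistedSquare τ ρ w := by
    simp [Representation.averageMap, GroupAlgebra.average]
  have hcomp : (TensorProduct.comm k V V).toLinearMap ∘ₗ ∑ w, twistedSquare τ ρ w =
      ∑ w, (TensorProduct.comm k V V).toLinearMap ∘ₗ twistedSquare τ ρ w :=
    Finset.mul_sum (R := End k (V ⊗[k] V)) _ _ _
  simp only [twistedIndicator, hchar, haverage, LinearMap.comp_smul, map_smul, smul_eq_mul,
    hcomp, map_sum]

theorem twistedIndicator_eq_zero_or_mul_self_eq_one [Invertible (Fintype.card G : k)]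
    (hτ : Function.Involutive τ) (hρ : finrank k (twistedSquare τ ρ).invariants ≤ 1) :
    twistedIndicator τ ρ = 0 ∨ twistedIndicator τ ρ * twistedIndicator τ ρ = 1 := by
  rw [twistedIndicator_eq_trace_comm_comp_averageMap]
  exact trace_comp_eq_zero_or_mul_self_eq_one (twistedSquare τ ρ).isProj_averageMap hρ
    (LinearMap.ext fun x => (TensorProduct.comm k V V).symm_apply_apply x)
    fun x => comm_mem_invariants_twistedSquare ρ hτ

end TwistedIndicator

section Schur

universe u v

variable {k : Type u} {G : Type v} [Field k] [IsAlgClosed k] [Monoid G] (V : FDRep k G) [Simple V]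

theorem exists_eq_smul_one_of_commute (A : End k V) (hA : ∀ g, Commute A (V.ρ g)) :
    ∃ c : k, A = c • 1 := by
  let φ : V ⟶ V := ⟨FGModuleCat.ofHom A, fun g => FGModuleCat.hom_ext (hA g)⟩
  obtain ⟨c, hc⟩ := endomorphism_simple_eq_smul_id k φ
  exact ⟨c, congrArg (fun ψ : V ⟶ V => ψ.hom.hom.hom) hc.symm⟩

theorem eq_zero_of_commute_of_trace_eq_zero [CharZero k] {A : End k V} (hA : ∀ g, Commute A (V.ρ g))
    (htrace : LinearMap.trace k V A = 0) : A = 0 := by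
  obtain ⟨c, rfl⟩ := exists_eq_smul_one_of_commute V A hA
  rw [map_smul, LinearMap.trace_one, smul_eq_mul, mul_eq_zero, Nat.cast_eq_zero] at htrace
  rcases htrace with hc | hV
  · rw [hc, zero_smul]
  · have : Subsingleton V := finrank_zero_iff.mp hV
    exact Subsingleton.elim _ _

end Schur

section Simple

universe u

variable {k G : Type u} [Field k] [IsAlgClosed k] [CharZero k] [Group G] [Finite G]

theorem simple_of_isIrreducible {V : Type u} [AddCommGroup V] [Module k V] [FiniteDimensional k V]
    (ρ : Representation k G V) [ρ.IsIrreducible] : Simple (FDRep.of ρ) := by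
  have := Fintype.ofFinite G
  have := invertibleOfNonzero (NeZero.ne (Nat.card G : k))
  have hnorm := ρ.card_inv_mul_sum_char_mul_char_eq_finrank ρ
  rw [Representation.IsIrreducible.finrank_intertwiningMap_self, Nat.cast_one,
    inv_mul_eq_one₀ (NeZero.ne _)] at hnorm
  exact (FDRep.simple_iff_char_is_norm_one _).mpr hnorm.symm

variable (V : FDRep k G) [Simple V]

theorem simple_comp_mulEquiv (τ : G ≃* G) : Simple (FDRep.of (V.ρ.comp τ.toMonoidHom)) := by
  have := Fintype.ofFinite G
  rw [FDRep.simple_iff_char_is_norm_one, ← (FDRep.simple_iff_char_is_norm_one V).mp inferInstance,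
    ← τ.toEquiv.sum_comp fun g => V.character g * V.character g⁻¹]
  exact Finset.sum_congr rfl fun g _ => by simp [FDRep.character]

theorem simple_dual : Simple (FDRep.of (Representation.dual V.ρ)) := by
  have := Fintype.ofFinite G
  rw [FDRep.simple_iff_char_is_norm_one, ← (FDRep.simple_iff_char_is_norm_one V).mp inferInstance]
  exact Finset.sum_congr rfl fun g _ => by rw [FDRep.char_dual, FDRep.char_dual, inv_inv, mul_comm]

theorem finrank_invariants_twistedSquare_le_one (τ : G ≃* G) :
    finrank k (twistedSquare τ V.ρ).invariants ≤ 1 := by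
  classical
  have := Fintype.ofFinite G
  have := invertibleOfNonzero (NeZero.ne (Nat.card G : k))
  let W := FDRep.of (V.ρ.comp τ.toMonoidHom)
  have : Simple W := simple_comp_mulEquiv V τ
  have : Simple (FDRep.of (Representation.dual W.ρ)) := simple_dual W
  have hfinrank := (twistedSquare τ V.ρ).card_inv_mul_sum_char_eq_finrank
  have hchar (g : G) : (twistedSquare τ V.ρ).character g =
      V.character g * (FDRep.of (Representation.dual W.ρ)).character g⁻¹ := by
    rw [twistedSquare, Representation.char_tensor, FDRep.char_dual, inv_inv]
    rfl
  simp only [hchar, FDRep.char_orthonormal] at hfinrank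
  split_ifs at hfinrank
  · exact le_of_eq (by exact_mod_cast hfinrank.symm)
  · exact le_of_eq_of_le (by exact_mod_cast hfinrank.symm) zero_le_one

end Simple

section Completeness

theorem commute_sum_smul_apply_inv {k G V : Type*} [CommSemiring k] [Group G] [Fintype G]
    [AddCommMonoid V] [Module k V] (ρ : Representation k G V) {f : G → k}
    (hf : ∀ g h, f (h * g * h⁻¹) = f g) (g : G) :
    Commute (∑ x, f x • ρ x⁻¹) (ρ g) := by
  rw [Commute, SemiconjBy, Finset.sum_mul, Finset.mul_sum, ← (MulAut.conj g).toEquiv.sum_comp]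
  refine Finset.sum_congr rfl fun x _ => ?_
  have hx : (MulAut.conj g).toEquiv x = g * x * g⁻¹ := rfl
  rw [smul_mul_assoc, mul_smul_comm, ← map_mul, ← map_mul, hx, hf]
  congr 2
  group

universe u

variable {k G : Type u} [Field k] [IsAlgClosed k] [CharZero k] [Group G] [Finite G]

theorem smul_eq_zero_of_forall_simple_asAlgebraHom_eq_zero {a : k[G]}
    (ha : ∀ (W : FDRep k G) [Simple W], Representation.asAlgebraHom W.ρ a = 0)
    (M : Type u) [AddCommGroup M] [Module k M] [Module k[G] M] [IsScalarTower k k[G] M]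
    [IsSimpleModule k[G] M] (x : M) : a • x = 0 := by
  have : FiniteDimensional k M := Module.Finite.trans k[G] _
  let ρ : Representation k G M := Representation.ofModule' M
  have hρ (b : k[G]) (y : M) : ρ.asAlgebraHom b y = b • y :=
    LinearMap.congr_fun (DFunLike.congr_fun
      ((MonoidAlgebra.lift k (End k M) G).apply_symm_apply (Algebra.lsmul k k M)) b) y
  let e : ρ.asModule ≃ₗ[k[G]] M :=
    { ρ.asModuleEquiv.toAddEquiv with
      map_smul' := fun b y => (ρ.asModuleEquiv_map_smul b y).trans (hρ b _) }
  have : IsSimpleModule k[G] ρ.asModule := .congr e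
  have : ρ.IsIrreducible := ρ.irreducible_iff_isSimpleModule_asModule.mpr this
  have : Simple (FDRep.of ρ) := simple_of_isIrreducible ρ
  rw [← hρ]
  exact LinearMap.congr_fun (ha (FDRep.of ρ)) x

theorem eq_zero_of_forall_simple_asAlgebraHom_eq_zero {a : k[G]}
    (ha : ∀ (W : FDRep k G) [Simple W], Representation.asAlgebraHom W.ρ a = 0) : a = 0 := by
  have hjacobson : a ∈ Ring.jacobson k[G] := by
    refine Submodule.mem_sInf.mpr fun m hm => ?_
    have : IsSimpleModule k[G] (k[G] ⧸ m) := isSimpleModule_iff_isCoatom.mpr hm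
    have hmk := smul_eq_zero_of_forall_simple_asAlgebraHom_eq_zero ha (k[G] ⧸ m)
      (Submodule.Quotient.mk 1)
    rwa [← Submodule.Quotient.mk_smul, smul_eq_mul, mul_one, Submodule.Quotient.mk_eq_zero] at hmk
  rwa [IsSemisimpleRing.jacobson_eq_bot, Submodule.mem_bot] at hjacobson

theorem eq_zero_of_forall_simple_sum_mul_character_eq_zero [Fintype G] {f : G → k}
    (hf : ∀ g h, f (h * g * h⁻¹) = f g)
    (horth : ∀ (W : FDRep k G) [Simple W], ∑ x, f x * W.character x⁻¹ = 0) : f = 0 := by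
  have hoperator (W : FDRep k G) [Simple W] : ∑ x, f x • W.ρ x⁻¹ = 0 :=
    eq_zero_of_commute_of_trace_eq_zero W (commute_sum_smul_apply_inv W.ρ hf) (by
      simpa only [map_sum, map_smul, smul_eq_mul, FDRep.character] using horth W)
  have hsum : ∑ x, MonoidAlgebra.single x⁻¹ (f x) = (0 : k[G]) :=
    eq_zero_of_forall_simple_asAlgebraHom_eq_zero fun W _ => by
      simpa only [map_sum, Representation.asAlgebraHom_single] using hoperator W
  funext x
  classical
  have := congrArg (fun a : k[G] => a.coeff x⁻¹) hsum
  simpa [Finsupp.single_apply] using this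

end Completeness

section CompleteFamily

variable {G ι : Type} [Group G] [Fintype G] {V : ι → FDRep ℂ G}

theorem IsCompleteIrrFamily.sum_character_mul_character_inv_s13 [DecidableEq ι]
    (hV : IsCompleteIrrFamily V) (i j : ι) :
    (Nat.card G : ℂ)⁻¹ * ∑ x, (V i).character x * (V j).character x⁻¹ = if i = j then 1 else 0 := by
  classical
  have := invertibleOfNonzero (NeZero.ne (Nat.card G : ℂ))
  have := hV.1 i
  have := hV.1 j
  have hiso : Nonempty (V i ≅ V j) ↔ i = j :=
    ⟨hV.2.1 i j, fun h => h ▸ ⟨Iso.refl _⟩⟩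
  simp only [FDRep.char_orthonormal, hiso]

theorem IsCompleteIrrFamily.eq_sum_mul_character [Fintype ι] (hV : IsCompleteIrrFamily V)
    {f : G → ℂ} (hf : ∀ g h, f (h * g * h⁻¹) = f g) (g : G) :
    f g = ∑ i, ((Nat.card G : ℂ)⁻¹ * ∑ x, f x * (V i).character x⁻¹) * (V i).character g := by
  classical
  let c (i : ι) : ℂ := (Nat.card G : ℂ)⁻¹ * ∑ x, f x * (V i).character x⁻¹
  have hdiff : (fun x => f x - ∑ i, c i * (V i).character x) = 0 := by
    refine eq_zero_of_forall_simple_sum_mul_character_eq_zero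
      (fun g h => by simp only [hf, FDRep.char_conj]) fun W hW => ?_
    obtain ⟨j, ⟨φ⟩⟩ := hV.2.2 W hW
    rw [← FDRep.char_iso φ]
    refine (mul_eq_zero_iff_left (inv_ne_zero (NeZero.ne (Nat.card G : ℂ)))).mp ?_
    calc (Nat.card G : ℂ)⁻¹ * ∑ x, (f x - ∑ i, c i * (V i).character x) * (V j).character x⁻¹
        = c j - ∑ i, c i *
            ((Nat.card G : ℂ)⁻¹ * ∑ x, (V i).character x * (V j).character x⁻¹) := by
          simp only [sub_mul, Finset.sum_sub_distrib, Finset.sum_mul, mul_sub, c]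
          rw [Finset.sum_comm]
          simp only [Finset.mul_sum, mul_assoc, mul_left_comm (Nat.card G : ℂ)⁻¹]
      _ = 0 := by
          simp only [hV.sum_character_mul_character_inv_s13, mul_ite, mul_one, mul_zero,
            Finset.sum_ite_eq', Finset.mem_univ, if_true, sub_self]
  exact sub_eq_zero.mp (congrFun hdiff g)

end CompleteFamily

section TwistedSqrtCount

/-- The number of twisted square roots of `x`, that is, of solutions of `w * τ w = x`. -/
noncomputable def twistedSqrtCount {G : Type*} [Mul G] (τ : G → G) (x : G) : ℕ :=
  Nat.card {w : G // w * τ w = x}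

theorem sum_twistedSqrtCount_mul {G R : Type*} [Mul G] [Fintype G] [Semiring R] (τ : G → G)
    (f : G → R) : ∑ x, (twistedSqrtCount τ x : R) * f x = ∑ w, f (w * τ w) := by
  classical
  rw [← Fintype.sum_fiberwise' (fun w => w * τ w) f]
  simp [twistedSqrtCount]

variable {G : Type*} [Group G] {τ : G ≃* G}

theorem twistedSqrtCount_conj (hτ : Function.Involutive τ) (g h : G) :
    twistedSqrtCount τ (h * g * h⁻¹) = twistedSqrtCount τ g := by
  refine (Nat.card_congr
    (((Equiv.mulLeft h).trans (Equiv.mulRight (τ h)⁻¹)).subtypeEquiv fun w => ?_)).symm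
  have hw : h * w * (τ h)⁻¹ * τ (h * w * (τ h)⁻¹) = h * (w * τ w) * h⁻¹ := by
    simp only [map_mul, map_inv, hτ h]
    group
  change w * τ w = g ↔ h * w * (τ h)⁻¹ * τ (h * w * (τ h)⁻¹) = h * g * h⁻¹
  rw [hw, mul_left_inj, mul_right_inj]

theorem sum_twistedSqrtCount_mul_character_inv {k V : Type*} [Field k] [AddCommGroup V]
    [Module k V] [Fintype G] (hτ : Function.Involutive τ) (ρ : Representation k G V) :
    (Nat.card G : k)⁻¹ * ∑ x, (twistedSqrtCount τ x : k) * ρ.character x⁻¹ =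
      twistedIndicator τ ρ := by
  rw [sum_twistedSqrtCount_mul τ fun x => ρ.character x⁻¹, twistedIndicator,
    ← (τ.toEquiv.trans (Equiv.inv G)).sum_comp fun w => ρ.character (w * τ w)]
  simp [hτ _]

theorem IsCompleteIrrFamily.twistedSqrtCount_eq_sum {G ι : Type} [Group G] [Fintype G] [Fintype ι]
    {V : ι → FDRep ℂ G} (hV : IsCompleteIrrFamily V) {τ : G ≃* G} (hτ : Function.Involutive τ)
    (g : G) :
    (twistedSqrtCount τ g : ℂ) = ∑ i, twistedIndicator τ (V i).ρ * (V i).character g := by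
  rw [hV.eq_sum_mul_character (f := fun x => (twistedSqrtCount τ x : ℂ))
    fun g h => by rw [twistedSqrtCount_conj hτ]]
  exact Finset.sum_congr rfl fun i _ =>
    congrArg (· * _) (sum_twistedSqrtCount_mul_character_inv hτ (V i).ρ)

end TwistedSqrtCount

section Involution

theorem smul_apply_mul_self_eq_one {G k V : Type*} [Monoid G] [CommSemiring k] [AddCommMonoid V]
    [Module k V] (ρ : Representation k G V) {z : G} {ε : k} (hz : z * z = 1) (hε : ε * ε = 1) :
    (ε • ρ z) * (ε • ρ z) = 1 := by
  rw [smul_mul_smul_comm, hε, one_smul, ← map_mul, hz, map_one]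

variable {G k V : Type*} [Monoid G] [Field k] [AddCommGroup V] [Module k V]
  [FiniteDimensional k V] (ρ : Representation k G V) {z : G} {ε : k}

theorem mul_character_le_finrank [PartialOrder k] [IsStrictOrderedRing k] (hz : z * z = 1)
    (hε : ε = 0 ∨ ε * ε = 1) : ε * ρ.character z ≤ finrank k V := by
  rcases hε with rfl | hε
  · rw [zero_mul]
    exact Nat.cast_nonneg _
  · rw [Representation.character, ← smul_eq_mul, ← map_smul]
    exact trace_le_finrank_of_mul_self_eq_one (smul_apply_mul_self_eq_one ρ hz hε)

theorem mul_character_mul_eq_character [CharZero k] (hz : z * z = 1) (hε : ε = 0 ∨ ε * ε = 1)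
    (h : ε * ρ.character z = finrank k V) (g : G) :
    ε * ρ.character (g * z) = ρ.character g := by
  rcases hε with rfl | hε
  · rw [zero_mul, eq_comm, Nat.cast_eq_zero] at h
    have : Subsingleton V := finrank_zero_iff.mp h
    rw [Representation.character, Representation.character, Subsingleton.elim (ρ (g * z)) 0,
      Subsingleton.elim (ρ g) 0, map_zero, mul_zero]
  · rw [Representation.character, ← smul_eq_mul, ← map_smul] at h ⊢
    have hscalar : ε • ρ z = 1 :=
      eq_one_of_mul_self_eq_one_of_trace_eq_finrank (smul_apply_mul_self_eq_one ρ hz hε) h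
    rw [map_mul, ← mul_smul_comm, hscalar, mul_one, Representation.character]

end Involution

/-- **Bump–Ginzburg generalized Frobenius–Schur formula** (Proposition `t.bg1`):
let `G` be a finite group, `τ` an automorphism of `G` with `τ² = 1`, and `z ∈ G`
with `z² = id`.  If `∑_{χ∈Irr(G)} χ(id) = #{w ∈ G : w·τ(w) = z}`, then for every
`g ∈ G`, `∑_{χ∈Irr(G)} χ(g) = #{w ∈ G : w·τ(w) = g·z}`. -/
theorem bump_ginzburg
    (G : Type) [Group G] [Fintype G]
    (τ : G ≃* G) (hτ : ∀ g, τ (τ g) = g)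
    (z : G) (hz : z * z = 1)
    {ι : Type} [Fintype ι] (V : ι → FDRep ℂ G)
    (hV : IsCompleteIrrFamily V)
    (hdim : ∑ i, (V i).character 1 = (Nat.card {w : G // w * τ w = z} : ℂ)) :
    ∀ g : G, ∑ i, (V i).character g =
      (Nat.card {w : G // w * τ w = g * z} : ℂ) := by
  have hindicator (i : ι) : twistedIndicator τ (V i).ρ = 0 ∨
      twistedIndicator τ (V i).ρ * twistedIndicator τ (V i).ρ = 1 := by
    have := invertibleOfNonzero (NeZero.ne (Fintype.card G : ℂ))
    have := hV.1 i
    exact twistedIndicator_eq_zero_or_mul_self_eq_one _ hτ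
      (finrank_invariants_twistedSquare_le_one (V i) τ)
  have hsum : ∑ i, twistedIndicator τ (V i).ρ * (V i).character z = ∑ i, (finrank ℂ (V i) : ℂ) := by
    simpa only [FDRep.char_one] using (hdim.trans (hV.twistedSqrtCount_eq_sum hτ z)).symm
  have heq := (Finset.sum_eq_sum_iff_of_le fun i _ =>
    mul_character_le_finrank (V i).ρ hz (hindicator i)).mp hsum
  intro g
  refine .trans (Finset.sum_congr rfl fun i hi => ?_) (hV.twistedSqrtCount_eq_sum hτ (g * z)).symm
  exact (mul_character_mul_eq_character (V i).ρ hz (hindicator i) (heq i hi) g).symm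
end
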